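/- arXiv:2112.04220 — 6 statements merged into one kernel-verified Lean document; each statement's English description precedes it below -/
import Mathlib

section
/- Let G be a finite group with o(G) < 13/6 (where 13/6 = o(S_3)). Then G is an elementary abelian 2-group, i.e., every element g of G satisfies g² = 1. -/
/-- The average element order `o(G) = ψ(G)/|G|` of a finite group `G`,
where `ψ(G) = ∑_{x ∈ G} |x|` is the sum of the orders of all elements of `G`. -/
noncomputable def avgOrder (G : Type*) [Group G] [Fintype G] : ℚ :=
  (∑ x : G, (orderOf x : ℚ)) / (Fintype.card G : ℚ)

theorem aux_top {G : Type*} [Group G] [Fintype G] (H : Subgroup G) (S : Finset G)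
    (hS : ∀ x ∈ S, x ∈ H) (hc : Fintype.card G < 2 * S.card) (g : G) : g ∈ H := by
  classical
  by_contra hg
  have hd : Disjoint S (S.image (fun x => g * x)) := by
    rw [Finset.disjoint_left]
    intro a ha hb
    obtain ⟨x, hx, rfl⟩ := Finset.mem_image.1 hb
    exact hg ((H.mul_mem_cancel_right (hS x hx)).1 (hS _ ha))
  have h1 := Finset.card_union_of_disjoint hd
  rw [Finset.card_image_of_injective _ (mul_right_injective g)] at h1
  have h2 := Finset.card_le_univ (S ∪ S.image (fun x => g * x))
  omega

theorem aux_three_quarters {G : Type*} [Group G] [Fintype G] (S : Finset G)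
    (hS : ∀ x, x ∈ S ↔ x ^ 2 = 1) (hc : 3 * Fintype.card G < 4 * S.card) (g : G) :
    g ^ 2 = 1 := by
  classical
  have hcen : ∀ a ∈ S, a ∈ Subgroup.center G := by
    intro a ha
    have key : ∀ y : G, y ∈ Subgroup.centralizer {a} := by
      apply aux_top _ (S ∩ S.image (fun x => a * x))
      · intro x hx
        obtain ⟨hx1, hx2⟩ := Finset.mem_inter.1 hx
        obtain ⟨b, hb, rfl⟩ := Finset.mem_image.1 hx2
        have e1 := (hS _).1 ha
        have e2 := (hS _).1 hb
        have e3 := (hS _).1 hx1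
        have hab : a * b = b * a := by
          have i1 : a⁻¹ = a := inv_eq_of_mul_eq_one_left (by rw [← sq, e1])
          have i2 : b⁻¹ = b := inv_eq_of_mul_eq_one_left (by rw [← sq, e2])
          have i3 : (a * b)⁻¹ = a * b := inv_eq_of_mul_eq_one_left (by rw [← sq, e3])
          rw [← i3, mul_inv_rev, i1, i2]
        rw [Subgroup.mem_centralizer_singleton_iff]
        rw [mul_assoc, ← hab]
      · have h1 := Finset.card_union_add_card_inter S (S.image (fun x => a * x))
        rw [Finset.card_image_of_injective _ (mul_right_injective a)] at h1
        have h2 := Finset.card_le_univ (S ∪ S.image (fun x => a * x))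
        omega
    rw [Subgroup.mem_center_iff]
    intro y
    have := key y
    rw [Subgroup.mem_centralizer_singleton_iff] at this
    first | exact this | exact this.symm
  have hall : ∀ y : G, y ∈ Subgroup.center G := aux_top _ S hcen (by omega)
  let H : Subgroup G :=
    { carrier := {x | x ^ 2 = 1}
      one_mem' := by simp
      mul_mem' := by
        intro a b ha hb
        simp only [Set.mem_ofPred_eq] at *
        have : Commute a b := (Subgroup.mem_center_iff.1 (hall b) a)
        rw [this.mul_pow, ha, hb, one_mul]
      inv_mem' := by
        intro a ha
        simp only [Set.mem_ofPred_eq] at *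
        rw [inv_pow, ha, inv_one] }
  exact aux_top H S (fun x hx => (hS x).1 hx) (by omega) g

theorem elementary_abelian_two_of_avgOrder_lt {G : Type*} [Group G] [Fintype G]
    (h : avgOrder G < 13 / 6) : ∀ g : G, g ^ 2 = 1 := by
  classical
  by_contra hne
  push Not at hne
  obtain ⟨g, hg⟩ := hne
  set S : Finset G := Finset.univ.filter (fun x => x ^ 2 = 1) with hSdef
  have hS : ∀ x, x ∈ S ↔ x ^ 2 = 1 := by simp [hSdef]
  have h34 : 4 * S.card ≤ 3 * Fintype.card G := by
    by_contra hc
    exact hg (aux_three_quarters S hS (by omega) g)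
  have h1S : 1 ≤ S.card := Finset.card_pos.2 ⟨1, (hS 1).2 (by simp)⟩
  have hsum : 6 * ∑ x : G, orderOf x < 13 * Fintype.card G := by
    have hpos : (0 : ℚ) < Fintype.card G := by exact_mod_cast Fintype.card_pos
    unfold avgOrder at h
    rw [div_lt_iff₀ hpos] at h
    have : (6 : ℚ) * ∑ x : G, (orderOf x : ℚ) < 13 * Fintype.card G := by linarith
    exact_mod_cast this
  have hcompl : S.card + Sᶜ.card = Fintype.card G := Finset.card_add_card_compl S
  have h2 : 2 ≤ Sᶜ.card := by
    have hgi : g ≠ g⁻¹ := by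
      intro e
      apply hg
      rw [sq]
      nth_rewrite 1 [e]
      simp
    rw [← Finset.card_pair hgi]
    apply Finset.card_le_card
    intro x hx
    simp only [Finset.mem_insert, Finset.mem_singleton] at hx
    rw [Finset.mem_compl, hS]
    rcases hx with rfl | rfl
    · exact hg
    · simpa using hg
  have hsplit := Finset.sum_add_sum_compl S (fun x : G => orderOf x)
  have hge3 : ∀ x ∈ Sᶜ, 3 ≤ orderOf x := by
    intro x hx
    rw [Finset.mem_compl, hS] at hx
    have h0 := orderOf_pos x
    have n1 : orderOf x ≠ 1 := by
      intro e
      exact hx (by rw [orderOf_eq_one_iff.1 e, one_pow])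
    have n2 : orderOf x ≠ 2 := by
      intro e
      exact hx (by rw [← e, pow_orderOf_eq_one])
    omega
  have hsumS : 2 * S.card ≤ (∑ x ∈ S, orderOf x) + 1 := by
    have hm : (1 : G) ∈ S := (hS 1).2 (by simp)
    have e := Finset.sum_erase_add S (fun x : G => orderOf x) hm
    have c := Finset.card_erase_of_mem hm
    have l : (S.erase 1).card • 2 ≤ ∑ x ∈ S.erase 1, orderOf x := by
      apply Finset.card_nsmul_le_sum
      intro x hx
      have hx1 := (Finset.mem_erase.1 hx).1
      have h0 := orderOf_pos x
      have n1 : orderOf x ≠ 1 := fun e => hx1 (orderOf_eq_one_iff.1 e)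
      omega
    simp only [smul_eq_mul, orderOf_one] at l e
    omega
  have l3 : Sᶜ.card • 3 ≤ ∑ x ∈ Sᶜ, orderOf x := Finset.card_nsmul_le_sum _ _ _ hge3
  simp only [smul_eq_mul] at l3
  by_cases hd : 3 ∣ Fintype.card G
  · omega
  · have l4 : Sᶜ.card • 4 ≤ ∑ x ∈ Sᶜ, orderOf x := by
      apply Finset.card_nsmul_le_sum
      intro x hx
      have a := hge3 x hx
      have b : orderOf x ≠ 3 := fun e => hd (e ▸ orderOf_dvd_card)
      omega
    simp only [smul_eq_mul] at l4
    omega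
end

section
/- Let G be a nontrivial finite group. Then o(G) ≥ 2 − 1/|G|; moreover o(G) ≤ 2 if and only if G is an elementary abelian 2-group (i.e., every element g satisfies g² = 1), and in that case o(G) = 2 − 1/|G|. -/
theorem avgOrder_lower_bound {G : Type*} [Group G] [Fintype G] [Nontrivial G] :
    2 - 1 / (Fintype.card G : ℚ) ≤ avgOrder G ∧
    (avgOrder G ≤ 2 ↔ ∀ g : G, g ^ 2 = 1) ∧
    ((∀ g : G, g ^ 2 = 1) → avgOrder G = 2 - 1 / (Fintype.card G : ℚ)) := by
  classical
  have hn : (0 : ℚ) < Fintype.card G := by exact_mod_cast Fintype.card_pos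
  let f : G → ℚ := fun x => (orderOf x : ℚ) - 2 + (if x = 1 then 1 else 0)
  have hsum : ∑ x, f x = (∑ x : G, (orderOf x : ℚ)) - 2 * Fintype.card G + 1 := by
    simp only [f, Finset.sum_add_distrib, Finset.sum_sub_distrib]
    simp [mul_comm]
  have havg : avgOrder G = 2 - 1 / (Fintype.card G : ℚ) + (∑ x, f x) / Fintype.card G := by
    rw [hsum, avgOrder]
    field_simp
    ring
  have hf0 : ∀ x, 0 ≤ f x := by
    intro x
    by_cases hx : x = 1
    · subst hx
      norm_num [f]
    · have h1 : 0 < orderOf x := orderOf_pos x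
      have h2 : orderOf x ≠ 1 := fun h => hx (orderOf_eq_one_iff.mp h)
      have h3 : (2 : ℚ) ≤ orderOf x := by exact_mod_cast (by omega : 2 ≤ orderOf x)
      simp only [f, hx, if_false]
      linarith
  have hf1 : ∀ x : G, x ^ 2 ≠ 1 → 1 ≤ f x := by
    intro x hx2
    have hx : x ≠ 1 := by
      rintro rfl
      simp at hx2
    have h1 : 0 < orderOf x := orderOf_pos x
    have h2 : orderOf x ≠ 1 := fun h => hx (orderOf_eq_one_iff.mp h)
    have h4 : orderOf x ≠ 2 := fun h => hx2 (h ▸ pow_orderOf_eq_one x)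
    have h3 : (3 : ℚ) ≤ orderOf x := by exact_mod_cast (by omega : 3 ≤ orderOf x)
    simp only [f, hx, if_false]
    linarith
  have heq : (∀ g : G, g ^ 2 = 1) → avgOrder G = 2 - 1 / (Fintype.card G : ℚ) := by
    intro h
    have hz : ∑ x, f x = 0 := by
      refine Finset.sum_eq_zero fun x _ => ?_
      by_cases hx : x = 1
      · subst hx
        norm_num [f]
      · have : orderOf x = 2 := orderOf_eq_prime (h x) hx
        simp [f, hx, this]
    rw [havg, hz]
    simp
  refine ⟨?_, ⟨?_, ?_⟩, heq⟩
  · rw [havg]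
    have := div_nonneg (Finset.sum_nonneg fun x (_ : x ∈ Finset.univ) => hf0 x) hn.le
    linarith
  · intro hle
    by_contra! hcon
    obtain ⟨g, hg⟩ := hcon
    have hne : g ≠ g⁻¹ := by
      intro h
      apply hg
      rw [pow_two]
      exact mul_eq_one_iff_eq_inv.mpr h
    have hg' : (g⁻¹) ^ 2 ≠ 1 := by simpa using hg
    have h2 : f g + f g⁻¹ ≤ ∑ x, f x := by
      rw [← Finset.sum_pair hne]
      exact Finset.sum_le_sum_of_subset_of_nonneg (Finset.subset_univ _) fun x _ _ => hf0 x
    have h3 := hf1 g hg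
    have h4 := hf1 _ hg'
    rw [avgOrder, div_le_iff₀ hn] at hle
    linarith
  · intro h
    rw [heq h]
    have : 0 < 1 / (Fintype.card G : ℚ) := by positivity
    linarith
end

section
/- Let G be a nontrivial finite group of odd order. Then o(G) ≥ 3 − 2/|G|, and in particular o(G) ≥ 7/3. -/
theorem avgOrder_ge_of_odd_order {G : Type*} [Group G] [Fintype G] [Nontrivial G]
    (h : Odd (Fintype.card G)) :
    3 - 2 / (Fintype.card G : ℚ) ≤ avgOrder G ∧ 7 / 3 ≤ avgOrder G := by
  classical
  have hc : 3 ≤ Fintype.card G := by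
    have h1 : 1 < Fintype.card G := Fintype.one_lt_card
    obtain ⟨k, hk⟩ := h
    omega
  have hge : ∀ x : G, x ≠ 1 → (3 : ℚ) ≤ (orderOf x : ℚ) := by
    intro x hx
    have h1 : orderOf x ≠ 1 := fun e => hx (orderOf_eq_one_iff.mp e)
    have h2 : Odd (orderOf x) := h.of_dvd_nat orderOf_dvd_card
    obtain ⟨k, hk⟩ := h2
    have : 3 ≤ orderOf x := by omega
    exact_mod_cast this
  have hsum : 3 * (Fintype.card G : ℚ) - 2 ≤ ∑ x : G, (orderOf x : ℚ) := by
    have h1 : ∑ x : G, ((3 : ℚ) - if x = 1 then 2 else 0) ≤ ∑ x : G, (orderOf x : ℚ) := by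
      apply Finset.sum_le_sum
      intro x _
      by_cases hx : x = 1
      · subst hx
        norm_num
      · simpa [hx] using hge x hx
    have h2 : ∑ x : G, ((3 : ℚ) - if x = 1 then 2 else 0) = 3 * (Fintype.card G : ℚ) - 2 := by
      rw [Finset.sum_sub_distrib]
      simp [mul_comm]
    linarith
  have hcq : (3 : ℚ) ≤ (Fintype.card G : ℚ) := by exact_mod_cast hc
  have hpos : (0 : ℚ) < (Fintype.card G : ℚ) := by linarith
  unfold avgOrder
  constructor
  · rw [le_div_iff₀ hpos, sub_mul, div_mul_cancel₀ _ hpos.ne']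
    exact hsum
  · rw [le_div_iff₀ hpos]
    linarith
end

section
/- Let A and B be finite groups with coprime orders, i.e., gcd(|A|,|B|) = 1. Then o(A × B) = o(A)·o(B). Moreover, if both A and B are nontrivial, then o(A × B) ≥ 7/2. -/
/-- Lower bound: if all nonidentity elements have order at least `k`. -/
lemma avgOrder_lower {G : Type*} [Group G] [Fintype G] (k : ℚ) (m : ℕ) (hm : 0 < m) (hk : 1 ≤ k)
    (hc : m ≤ Fintype.card G) (ho : ∀ x : G, x ≠ 1 → k ≤ (orderOf x : ℚ)) :
    k - (k - 1) / m ≤ avgOrder G := by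
  classical
  have hs : ∑ x : G, (k - if x = 1 then k - 1 else 0) ≤ ∑ x : G, (orderOf x : ℚ) := by
    apply Finset.sum_le_sum
    intro x _
    by_cases hx : x = 1
    · simp [hx]
    · simpa [hx] using ho x hx
  have hs2 : ∑ x : G, (k - if x = 1 then k - 1 else 0) = Fintype.card G * k - (k - 1) := by
    simp [Finset.sum_sub_distrib]
  rw [hs2] at hs
  have hm' : (0 : ℚ) < m := by exact_mod_cast hm
  have hc' : (m : ℚ) ≤ Fintype.card G := by exact_mod_cast hc
  have hn : (0 : ℚ) < Fintype.card G := lt_of_lt_of_le hm' hc'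
  unfold avgOrder
  rw [le_div_iff₀ hn]
  have h1 : (k - 1) * 1 ≤ (k - 1) * (Fintype.card G / m : ℚ) := by
    apply mul_le_mul_of_nonneg_left _ (by linarith)
    rwa [one_le_div hm']
  have h2 : (k - (k - 1) / m) * (Fintype.card G : ℚ)
      = Fintype.card G * k - (k - 1) * (Fintype.card G / m : ℚ) := by ring
  linarith

lemma avgOrder_ge_general {G : Type*} [Group G] [Fintype G] [Nontrivial G] :
    3 / 2 ≤ avgOrder G := by
  have := avgOrder_lower (G := G) 2 2 (by norm_num) (by norm_num) Fintype.one_lt_card (by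
    intro x hx
    have h1 : orderOf x ≠ 1 := fun h => hx (orderOf_eq_one_iff.mp h)
    have h2 := orderOf_pos x
    have : 2 ≤ orderOf x := by omega
    exact_mod_cast this)
  norm_num at this
  exact this

lemma avgOrder_ge_odd {G : Type*} [Group G] [Fintype G] [Nontrivial G]
    (hodd : ¬ 2 ∣ Fintype.card G) : 7 / 3 ≤ avgOrder G := by
  have hc : 1 < Fintype.card G := Fintype.one_lt_card
  have := avgOrder_lower (G := G) 3 3 (by norm_num) (by norm_num) (by omega) (by
    intro x hx
    have h1 : orderOf x ≠ 1 := fun h => hx (orderOf_eq_one_iff.mp h)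
    have h2 := orderOf_pos x
    have h3 : orderOf x ≠ 2 := fun h => hodd (h ▸ orderOf_dvd_card)
    have : 3 ≤ orderOf x := by omega
    exact_mod_cast this)
  norm_num at this
  exact this

theorem avgOrder_prod_of_coprime {A B : Type*} [Group A] [Fintype A] [Group B] [Fintype B]
    (h : Nat.Coprime (Fintype.card A) (Fintype.card B)) :
    avgOrder (A × B) = avgOrder A * avgOrder B ∧
    (Nontrivial A → Nontrivial B → 7 / 2 ≤ avgOrder (A × B)) := by
  have key : avgOrder (A × B) = avgOrder A * avgOrder B := by
    unfold avgOrder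
    rw [div_mul_div_comm, Fintype.card_prod, Finset.sum_mul_sum, Fintype.sum_prod_type]
    push_cast
    congr 1
    refine Finset.sum_congr rfl fun a _ => Finset.sum_congr rfl fun b _ => ?_
    have hab : Nat.Coprime (orderOf a) (orderOf b) :=
      Nat.Coprime.of_dvd orderOf_dvd_card orderOf_dvd_card h
    rw [Prod.orderOf_mk, hab.lcm_eq_mul]
    push_cast
    rfl
  refine ⟨key, fun hA hB => ?_⟩
  rw [key]
  have hA1 := avgOrder_ge_general (G := A)
  have hB1 := avgOrder_ge_general (G := B)
  by_cases h2 : 2 ∣ Fintype.card A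
  · have h3 : ¬ 2 ∣ Fintype.card B := fun h3 => by
      have := Nat.dvd_gcd h2 h3
      rw [h] at this
      omega
    have := avgOrder_ge_odd h3
    nlinarith
  · have := avgOrder_ge_odd h2
    nlinarith
end

section
/- Let G be a finite group and H a nontrivial normal subgroup of G. Then o(G/H) < o(G). -/
theorem avgOrder_quotient_lt {G : Type*} [Group G] [Fintype G]
    (H : Subgroup G) [H.Normal] [Fintype (G ⧸ H)] (hH : H ≠ ⊥) :
    avgOrder (G ⧸ H) < avgOrder G := by
  classical
  have hf : ∀ q : G ⧸ H, (Finset.univ.filter (fun x : G => (x : G ⧸ H) = q)).card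
      = (Finset.univ.filter (fun x : G => (x : G ⧸ H) = 1)).card := by
    intro q
    obtain ⟨g, rfl⟩ := QuotientGroup.mk_surjective q
    refine Finset.card_bij' (fun x _ => g⁻¹ * x) (fun x _ => g * x) ?_ ?_ ?_ ?_
    · intro a ha
      simp only [Finset.mem_filter, Finset.mem_univ, true_and] at ha ⊢
      simp [QuotientGroup.mk_mul, ha]
    · intro a ha
      simp only [Finset.mem_filter, Finset.mem_univ, true_and] at ha ⊢
      rw [QuotientGroup.mk_mul, ha, mul_one]
    · simp
    · simp
  set k := (Finset.univ.filter (fun x : G => (x : G ⧸ H) = 1)).card with hk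
  have hsum : ∀ f : G ⧸ H → ℚ, ∑ x : G, f (x : G ⧸ H) = k * ∑ q, f q := by
    intro f
    rw [← Finset.sum_fiberwise Finset.univ (fun x : G => (x : G ⧸ H)), Finset.mul_sum]
    refine Finset.sum_congr rfl fun q _ => ?_
    rw [Finset.sum_congr rfl (g := fun _ => f q), Finset.sum_const, hf q, nsmul_eq_mul]
    intro x hx
    rw [(Finset.mem_filter.mp hx).2]
  have hkpos : (0 : ℚ) < k := by
    have : 0 < k := Finset.card_pos.mpr ⟨1, by simp⟩
    exact_mod_cast this
  have hcard : (Fintype.card G : ℚ) = k * Fintype.card (G ⧸ H) := by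
    simpa using hsum (fun _ => 1)
  have hlt : ∑ x : G, (orderOf (x : G ⧸ H) : ℚ) < ∑ x : G, (orderOf x : ℚ) := by
    obtain ⟨h, hh, h1⟩ := H.bot_or_exists_ne_one.resolve_left hH
    refine Finset.sum_lt_sum (fun x _ => ?_) ⟨h, Finset.mem_univ _, ?_⟩
    · exact_mod_cast Nat.le_of_dvd (orderOf_pos x)
        (orderOf_map_dvd (QuotientGroup.mk' H) x)
    · rw [(QuotientGroup.eq_one_iff h).mpr hh, orderOf_one]
      have h2 : orderOf h ≠ 1 := by simpa using h1
      have h3 := orderOf_pos h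
      exact_mod_cast (by omega : 1 < orderOf h)
  rw [hsum (fun q => (orderOf q : ℚ))] at hlt
  have hq : (0 : ℚ) < Fintype.card (G ⧸ H) := by exact_mod_cast Fintype.card_pos
  unfold avgOrder
  rw [hcard, div_lt_div_iff₀ hq (by positivity)]
  nlinarith [mul_lt_mul_of_pos_right hlt hq]
end

section
/- Let G be a finite non-solvable group. Then o(G) > 311/100. -/
section helpers
open Finset

section simplefacts
variable {G : Type*} [Group G] [Fintype G] [IsSimpleGroup G]

theorem center_bot' (hna : ¬ ∀ a b : G, a * b = b * a) : Subgroup.center G = ⊥ := by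
  rcases Subgroup.Normal.eq_bot_or_eq_top (inferInstance : (Subgroup.center G).Normal) with h | h
  · exact h
  · exfalso; apply hna
    intro a b
    have : b ∈ Subgroup.center G := by rw [h]; trivial
    exact (Subgroup.mem_center_iff.1 this a)

theorem eq_one_of_central (hna : ¬ ∀ a b : G, a * b = b * a) (g : G) (hg : ∀ x, x * g = g * x) :
    g = 1 := by
  have : g ∈ Subgroup.center G := Subgroup.mem_center_iff.2 hg
  rw [center_bot' hna] at this
  simpa using this

theorem not_pgroup (hna : ¬ ∀ a b : G, a * b = b * a) (p : ℕ) [Fact p.Prime] : ¬ IsPGroup p G := by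
  intro h
  have := h.center_nontrivial
  rw [center_bot' hna] at this
  exact not_subsingleton _ (inferInstance : Subsingleton (⊥ : Subgroup G))

theorem index_fact (H : Subgroup G) (hH : H ≠ ⊤) : Fintype.card G ∣ H.index.factorial := by
  classical
  have h1 : H.normalCore = ⊥ := by
    rcases Subgroup.Normal.eq_bot_or_eq_top (inferInstance : (H.normalCore).Normal) with h | h
    · exact h
    · exact absurd (top_le_iff.1 (h ▸ H.normalCore_le)) hH
  rw [Subgroup.normalCore_eq_ker] at h1
  have h2 := Subgroup.card_dvd_of_injective _ ((MonoidHom.ker_eq_bot_iff _).1 h1)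
  rw [Nat.card_eq_fintype_card, Nat.card_perm] at h2
  exact h2

theorem burnside (hna : ¬ ∀ a b : G, a * b = b * a) (p : ℕ) [Fact p.Prime] (P : Sylow p G)
    (hP : (P : Subgroup G) ≠ ⊥) :
    ¬ (Subgroup.normalizer (P : Set G) ≤ Subgroup.centralizer (P : Set G)) := by
  intro h
  have hc := MonoidHom.ker_transferSylow_isComplement' P h
  rcases Subgroup.Normal.eq_bot_or_eq_top (inferInstance : (MonoidHom.transferSylow P h).ker.Normal) with h | h
  · rw [h] at hc
    have : (P : Subgroup G) = ⊤ := by simpa using hc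
    have h3 := P.2
    apply not_pgroup hna p
    intro g
    have hg : g ∈ (P : Subgroup G) := by rw [this]; trivial
    obtain ⟨k, hk⟩ := h3 ⟨g, hg⟩
    exact ⟨k, by simpa [Subtype.ext_iff] using hk⟩
  · rw [h] at hc
    exact hP (by simpa using hc)

theorem sylow_not_normal (hna : ¬ ∀ a b : G, a * b = b * a) (p : ℕ) [Fact p.Prime]
    (hp : p ∣ Fintype.card G) (P : Sylow p G) : ¬ (P : Subgroup G).Normal := by
  intro h
  rcases h.eq_bot_or_eq_top with h | h
  · exact P.ne_bot_of_dvd_card (by rwa [Nat.card_eq_fintype_card]) h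
  · have h3 := P.2
    apply not_pgroup hna p
    intro g
    have hg : g ∈ (P : Subgroup G) := by rw [h]; trivial
    obtain ⟨k, hk⟩ := h3 ⟨g, hg⟩
    exact ⟨k, by simpa [Subtype.ext_iff] using hk⟩

theorem card_sylow_ge (hna : ¬ ∀ a b : G, a * b = b * a) (p : ℕ) [Fact p.Prime]
    (hp : p ∣ Fintype.card G) : p + 1 ≤ Nat.card (Sylow p G) := by
  have h1 := card_sylow_modEq_one p G
  have h2 : Nat.card (Sylow p G) ≠ 1 := by
    intro h
    have : Subsingleton (Sylow p G) := (Nat.card_eq_one_iff_unique.1 h).1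
    exact sylow_not_normal hna p hp (default : Sylow p G) (Sylow.normal_of_subsingleton _)
  have h3 : 0 < Nat.card (Sylow p G) := Nat.card_pos
  have h4 := (Nat.modEq_iff_dvd' h3).1 h1.symm
  have := Nat.le_of_dvd (by omega) h4
  omega

end simplefacts


open Finset
section counting
open scoped Classical
variable {G : Type*} [Group G] [Fintype G]

theorem card_sub (H : Subgroup G) : (univ.filter (fun x : G => x ∈ H)).card = Nat.card H := by
  rw [Nat.card_eq_fintype_card, Fintype.card_subtype]

theorem double_count (S R : Subgroup G) (hRS : R ≤ S) (P : G → Prop) :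
    ∑ s ∈ univ.filter (fun s : G => s ∈ S), (univ.filter (fun h : G => h ∈ R ∧ P (s * h))).card
     = Nat.card R * (univ.filter (fun s : G => s ∈ S ∧ P s)).card := by
  have e : ∀ s : G, (univ.filter (fun h : G => h ∈ R ∧ P (s * h))) =
      (univ.filter (fun h : G => h ∈ R)).bipartiteAbove (fun s h => P (s * h)) s := by
    intro s; rw [Finset.bipartiteAbove, Finset.filter_filter]
  simp_rw [e]
  rw [Finset.sum_card_bipartiteAbove_eq_sum_card_bipartiteBelow, ← card_sub R,
    ← smul_eq_mul, ← Finset.sum_const]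
  refine Finset.sum_congr rfl fun h hh => ?_
  simp only [mem_filter, mem_univ, true_and] at hh
  rw [Finset.bipartiteBelow, Finset.filter_filter]
  apply Finset.card_bij (fun s _ => s * h)
  · intro s hs
    simp only [mem_filter, mem_univ, true_and] at hs ⊢
    exact ⟨S.mul_mem hs.1 (hRS hh), hs.2⟩
  · intro a _ b _ hab; simpa using hab
  · intro s hs
    simp only [mem_filter, mem_univ, true_and] at hs
    refine ⟨s * h⁻¹, ?_, by simp⟩
    simp only [mem_filter, mem_univ, true_and]
    exact ⟨S.mul_mem hs.1 (S.inv_mem (hRS hh)), by simpa using hs.2⟩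

theorem proper_sub_pgroup (p : ℕ) [Fact p.Prime] (R K : Subgroup G) (hR : IsPGroup p R)
   (hK : K ≤ R) (hne : K ≠ R) : p * Nat.card K ≤ Nat.card R := by
  obtain ⟨k, hk⟩ := IsPGroup.iff_card.1 hR
  obtain ⟨c, hc⟩ := Subgroup.card_dvd_of_le hK
  have hcd : c ∣ p ^ k := ⟨Nat.card K, by rw [← hk, hc, mul_comm]⟩
  obtain ⟨j, hj, rfl⟩ := (Nat.dvd_prime_pow (Fact.out : p.Prime)).1 hcd
  rcases j with _ | j
  · exfalso
    apply hne
    exact Subgroup.eq_of_le_of_card_ge hK (by rw [hc]; simp)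
  · rw [hc, pow_succ, mul_comm]
    apply Nat.mul_le_mul_left
    exact Nat.le_mul_of_pos_left _ (pow_pos (Fact.out : p.Prime).pos _)

theorem fiber_bound (p : ℕ) [Fact p.Prime] (R : Subgroup G) (hR : IsPGroup p R) (x : G)
    (hx : x ∉ Subgroup.normalizer (R : Set G)) :
    p * (univ.filter (fun h : G => h ∈ R ∧ (x * h)^2 = 1)).card ≤ Nat.card R := by
  rcases Finset.eq_empty_or_nonempty (univ.filter (fun h : G => h ∈ R ∧ (x * h)^2 = 1)) with he | ⟨h0, hh⟩
  · rw [he]; simp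
  simp only [mem_filter, mem_univ, true_and] at hh
  obtain ⟨h0R, hI⟩ := hh
  set z := x * h0 with hz
  have hzN : z ∉ Subgroup.normalizer (R : Set G) := by
    intro hzn; apply hx
    have : x = z * h0⁻¹ := by simp [hz]
    rw [this]
    exact mul_mem hzn (inv_mem (Subgroup.le_normalizer h0R))
  let K : Subgroup G := R ⊓ R.comap (MulAut.conj z).toMonoidHom
  have hKne : K ≠ R := by
    intro hK
    apply hzN
    have h1 : R ≤ R.comap (MulAut.conj z).toMonoidHom := by intro r hr; rw [← hK] at hr; exact hr.2
    have h2 : R.map (MulAut.conj z).toMonoidHom ≤ R := Subgroup.map_le_iff_le_comap.2 h1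
    have h3 : R.map (MulAut.conj z).toMonoidHom = R := by
      apply Subgroup.eq_of_le_of_card_ge h2
      rw [Subgroup.card_map_of_injective (MulAut.conj z).injective]
    rw [Subgroup.mem_normalizer_iff]
    intro h
    constructor
    · intro hh
      exact h1 hh
    · intro hh
      have : z * h * z⁻¹ ∈ R.map (MulAut.conj z).toMonoidHom := by rw [h3]; exact hh
      obtain ⟨w, hw, hw2⟩ := this
      have : w = h := by simpa using hw2
      rw [← this]; exact hw
  refine le_trans ?_ (proper_sub_pgroup p R K hR inf_le_left hKne)
  apply Nat.mul_le_mul_left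
  rw [← card_sub K]
  apply Finset.card_le_card_of_injOn (fun h => h0⁻¹ * h)
  · intro h hh
    simp only [Finset.mem_coe, mem_filter, mem_univ, true_and] at hh ⊢
    refine ⟨R.mul_mem (R.inv_mem h0R) hh.1, ?_⟩
    have hkR : h0⁻¹ * h ∈ R := mul_mem (inv_mem h0R) hh.1
    show z * (h0⁻¹ * h) * z⁻¹ ∈ R
    have e1 : z * (h0⁻¹ * h) = x * h := by rw [hz]; group
    have e2 : (z * (h0⁻¹ * h))^2 = 1 := by rw [e1]; exact hh.2
    have e3 : z⁻¹ = z := by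
      rw [inv_eq_iff_mul_eq_one, ← pow_two]; exact hI
    have e4 : z * (h0⁻¹ * h) * z⁻¹ = (h0⁻¹ * h)⁻¹ := by
      rw [e3, eq_inv_iff_mul_eq_one, mul_assoc _ z, ← pow_two]; exact e2
    rw [e4]; exact inv_mem hkR
  · intro a _ b _ hab
    simpa using hab

theorem lemmaS (p : ℕ) [Fact p.Prime] (S R : Subgroup G) (hRS : R ≤ S) (hR : IsPGroup p R) (y : G) :
    p * (univ.filter (fun s : G => s ∈ S ∧ (y * s)^2 = 1)).card ≤
    p * (univ.filter (fun s : G => s ∈ S ∧ y * s ∈ Subgroup.normalizer (R : Set G))).card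
      + Nat.card S := by
  have h := double_count S R hRS (fun s => (y * s)^2 = 1)
  have hb : ∀ s ∈ univ.filter (fun s : G => s ∈ S),
     p * (univ.filter (fun h : G => h ∈ R ∧ (y * (s * h))^2 = 1)).card ≤
      (if y * s ∈ Subgroup.normalizer (R : Set G) then p * Nat.card R else 0) + Nat.card R := by
    intro s _
    split_ifs with hN
    · refine le_trans ?_ (Nat.le_add_right _ _)
      apply Nat.mul_le_mul_left
      rw [← card_sub R]
      apply Finset.card_le_card
      intro h; simp +contextual
    · rw [zero_add]
      have := fiber_bound p R hR (y * s) hN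
      simpa only [mul_assoc] using this
  have hs := Finset.sum_le_sum hb
  rw [← Finset.mul_sum, h, Finset.sum_add_distrib, ← Finset.sum_filter, Finset.sum_const,
    Finset.sum_const, Finset.filter_filter, card_sub] at hs
  have hpos : 0 < Nat.card R := Nat.card_pos
  simp only [smul_eq_mul] at hs
  apply Nat.le_of_mul_le_mul_left _ hpos
  nlinarith

theorem lemmaS_norm (S R : Subgroup G) (y : G) :
    (univ.filter (fun s : G => s ∈ S ∧ y * s ∈ Subgroup.normalizer (R : Set G))).card ≤
    Nat.card (S ⊓ Subgroup.normalizer (R : Set G) : Subgroup G) := by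
  rcases Finset.eq_empty_or_nonempty (univ.filter (fun s : G => s ∈ S ∧ y * s ∈ Subgroup.normalizer (R : Set G))) with he | ⟨h0, hh⟩
  · rw [he]; simp
  simp only [mem_filter, mem_univ, true_and] at hh
  rw [← card_sub]
  apply Finset.card_le_card_of_injOn (fun h => h0⁻¹ * h)
  · intro h h2
    simp only [Finset.mem_coe, mem_filter, mem_univ, true_and] at h2 ⊢
    refine ⟨S.mul_mem (S.inv_mem hh.1) h2.1, ?_⟩
    have : h0⁻¹ * h = (y * h0)⁻¹ * (y * h) := by group
    rw [this]
    exact Subgroup.mul_mem _ (Subgroup.inv_mem _ hh.2) h2.2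
  · intro a _ b _ hab
    simpa using hab
end counting


open Finset
section basics
open scoped Classical

noncomputable def cI (G : Type*) [Group G] [Fintype G] : ℕ := (univ.filter (fun x : G => x ^ 2 = 1)).card
noncomputable def cT (G : Type*) [Group G] [Fintype G] : ℕ := (univ.filter (fun x : G => x ^ 3 = 1)).card

theorem pointwise_order {G : Type*} [Group G] [Fintype G] (x : G) :
    4 ≤ orderOf x + 2 * (if x ^ 2 = 1 then 1 else 0) + (if x ^ 3 = 1 then 1 else 0) := by
  by_cases h : 4 ≤ orderOf x
  · omega
  have hpos := orderOf_pos x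
  have h3 : orderOf x = 1 ∨ orderOf x = 2 ∨ orderOf x = 3 := by omega
  have e2 : x ^ 2 = 1 ↔ orderOf x ∣ 2 := orderOf_dvd_iff_pow_eq_one.symm
  have e3 : x ^ 3 = 1 ↔ orderOf x ∣ 3 := orderOf_dvd_iff_pow_eq_one.symm
  simp only [e2, e3]
  rcases h3 with h | h | h <;> rw [h] <;> norm_num

theorem star_ineq {G : Type*} [Group G] [Fintype G] :
    4 * Fintype.card G ≤ (∑ x : G, orderOf x) + 2 * cI G + cT G := by
  have := Finset.sum_le_sum (fun (x : G) (_ : x ∈ univ) => pointwise_order x)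
  simp only [Finset.sum_add_distrib, ← Finset.mul_sum, Finset.sum_const, smul_eq_mul] at this
  rw [← Finset.card_filter, ← Finset.card_filter] at this
  rw [cI, cT, Fintype.card]
  linarith

variable {G : Type*} [Group G] [Fintype G] [IsSimpleGroup G]

theorem lemmaS_simple (hna : ¬ ∀ a b : G, a * b = b * a) (p : ℕ) (hpp : p.Prime) (hp5 : 5 ≤ p)
    (hp : p ∣ Fintype.card G) : 30 * cI G ≤ 11 * Fintype.card G := by
  have := Fact.mk hpp
  let P : Sylow p G := default
  have h1 := lemmaS p ⊤ (P : Subgroup G) le_top P.2 1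
  have h2 := lemmaS_norm ⊤ (P : Subgroup G) 1
  rw [Subgroup.card_top, Nat.card_eq_fintype_card] at h1
  rw [top_inf_eq] at h2
  simp only [Subgroup.mem_top, true_and, one_mul] at h1 h2
  have h3 := card_sylow_ge hna p hp
  rw [P.card_eq_index_normalizer] at h3
  have h4 := Subgroup.card_mul_index (Subgroup.normalizer ((P : Subgroup G) : Set G))
  rw [Nat.card_eq_fintype_card (α := G)] at h4
  change p * cI G ≤ _ at h1
  set a := (univ.filter fun s : G => s ∈ Subgroup.normalizer ((P : Subgroup G) : Set G)).card
  generalize Nat.card (Subgroup.normalizer ((P : Subgroup G) : Set G)) = N at *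
  change p + 1 ≤ (Subgroup.normalizer ((P : Subgroup G) : Set G)).index at h3
  generalize (Subgroup.normalizer ((P : Subgroup G) : Set G)).index = k at *
  have h6 : 6 * N ≤ Fintype.card G := by rw [← h4]; nlinarith
  have h7 : p * a ≤ p * N := Nat.mul_le_mul_left _ h2
  have h8 : p * (6 * N) ≤ p * Fintype.card G := Nat.mul_le_mul_left _ h6
  have h9 : 5 * Fintype.card G ≤ p * Fintype.card G := Nat.mul_le_mul_right _ hp5
  apply Nat.le_of_mul_le_mul_left _ hpp.pos
  nlinarith

theorem card_ge_sylow (hna : ¬ ∀ a b : G, a * b = b * a) (p : ℕ) (hpp : p.Prime)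
    (hp : p ∣ Fintype.card G) : p * (p + 1) ≤ Fintype.card G := by
  have := Fact.mk hpp
  let P : Sylow p G := default
  have h3 := card_sylow_ge hna p hp
  rw [P.card_eq_index_normalizer] at h3
  have h4 := Subgroup.card_mul_index (Subgroup.normalizer ((P : Subgroup G) : Set G))
  have h5 : p ∣ Nat.card P := P.dvd_card_of_dvd_card (by rwa [Nat.card_eq_fintype_card])
  have h6 : p ≤ Nat.card P := Nat.le_of_dvd Nat.card_pos h5
  have h7 : Nat.card P ≤ Nat.card (Subgroup.normalizer ((P : Subgroup G) : Set G)) :=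
    Nat.le_of_dvd Nat.card_pos (Subgroup.card_dvd_of_le Subgroup.le_normalizer)
  rw [← Nat.card_eq_fintype_card, ← h4]
  exact Nat.mul_le_mul (h6.trans h7) h3

theorem not_dvd_six (hna : ¬ ∀ a b : G, a * b = b * a) : ¬ Fintype.card G ∣ 6 := by
  intro h
  have h1 : 1 < Fintype.card G := Fintype.one_lt_card
  have h6 := Nat.le_of_dvd (by norm_num) h
  have h3 : ¬ 3 ∣ Fintype.card G := by
    intro h3
    have := card_ge_sylow hna 3 Nat.prime_three h3
    omega
  have h2 : 2 ∣ Fintype.card G := by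
    generalize Fintype.card G = n at *
    interval_cases n <;> revert h h3 <;> decide
  have := card_ge_sylow hna 2 Nat.prime_two h2
  have : Fintype.card G = 6 := by omega
  rw [this] at h3
  norm_num at h3

theorem index_ge_four (hna : ¬ ∀ a b : G, a * b = b * a) (H : Subgroup G) (hH : H ≠ ⊤) :
    4 ≤ H.index := by
  by_contra hc
  apply not_dvd_six hna
  refine (index_fact H hH).trans ?_
  have : H.index ≤ 3 := by omega
  exact (Nat.factorial_dvd_factorial this)

theorem exists_prime_ge_five (hna : ¬ ∀ a b : G, a * b = b * a) (h9 : ¬ 9 ∣ Fintype.card G) :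
    ∃ p, p.Prime ∧ 5 ≤ p ∧ p ∣ Fintype.card G := by
  by_contra hc
  push Not at hc
  let P : Sylow 2 G := default
  have h1 := P.card_mul_index
  have h2 : ¬ 2 ∣ (P : Subgroup G).index := P.not_dvd_index
  have hdvd : (P : Subgroup G).index ∣ Fintype.card G := by
    rw [← Nat.card_eq_fintype_card]; exact Subgroup.index_dvd_card _
  have h3 : (P : Subgroup G).index ∣ 3 := by
    have hne : (P : Subgroup G).index ≠ 0 := Subgroup.index_ne_zero_of_finite
    generalize (P : Subgroup G).index = k at *
    have hk := Nat.eq_prime_pow_of_unique_prime_dvd (n := k) (p := 3) hne (by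
      intro q hq hqk
      have hq5 := hc q hq
      have : q < 5 := by
        by_contra h; exact hq5 (by omega) (hqk.trans hdvd)
      interval_cases q
      · exact absurd hq (by decide)
      · exact absurd hq (by decide)
      · exact absurd hqk h2
      · rfl
      · exact absurd hq (by decide))
    rw [hk] at hdvd ⊢
    have hl : k.primeFactorsList.length < 2 := by
      by_contra h
      apply h9
      refine dvd_trans ?_ hdvd
      exact pow_dvd_pow 3 (by omega : 2 ≤ _)
    interval_cases k.primeFactorsList.length <;> norm_num
  have htop : (P : Subgroup G) ≠ ⊤ := by
    intro h
    have h3 := P.2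
    apply not_pgroup hna 2
    intro g
    have hg : g ∈ (P : Subgroup G) := by rw [h]; trivial
    obtain ⟨k, hk⟩ := h3 ⟨g, hg⟩
    exact ⟨k, by simpa [Subtype.ext_iff] using hk⟩
  have h4 := index_ge_four hna _ htop
  have := Nat.le_of_dvd (by norm_num) h3
  omega

theorem caseA' (hna : ¬ ∀ a b : G, a * b = b * a) (h9 : ¬ 9 ∣ Fintype.card G)
    (h : 89 * Fintype.card G ≤ 200 * cI G + 100) : False := by
  obtain ⟨p, hp, h5, hpd⟩ := exists_prime_ge_five hna h9
  have h1 := lemmaS_simple hna p hp h5 hpd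
  have h2 := card_ge_sylow hna p hp hpd
  have : 5 * 6 ≤ p * (p+1) := Nat.mul_le_mul h5 (by omega)
  omega

theorem caseA (hna : ¬ ∀ a b : G, a * b = b * a) (h3 : ¬ 3 ∣ Fintype.card G) :
    311 * Fintype.card G < 100 * ∑ x : G, orderOf x := by
  by_contra hc
  have hs := star_ineq (G := G)
  have hT : cT G = 1 := by
    rw [cT, Finset.card_eq_one]
    refine ⟨1, ?_⟩
    ext x
    simp only [mem_filter, mem_univ, true_and, mem_singleton]
    constructor
    · intro hx
      have h1 : orderOf x ∣ 3 := orderOf_dvd_of_pow_eq_one hx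
      rcases (Nat.dvd_prime Nat.prime_three).1 h1 with h | h
      · exact orderOf_eq_one_iff.1 h
      · exact absurd (h ▸ orderOf_dvd_card) h3
    · rintro rfl; simp
  apply caseA' hna (fun h => h3 (dvd_trans (by norm_num) h))
  omega
end basics


open Finset
set_option linter.unusedSectionVars false
section classes
open scoped Classical
variable {G : Type*} [Group G] [Fintype G]

def cen (g : G) : Subgroup G := Subgroup.centralizer {g}
theorem mem_cen {g x : G} : x ∈ cen g ↔ x * g = g * x := by
  rw [cen, Subgroup.mem_centralizer_singleton_iff]

noncomputable def cls (g : G) : Finset G := univ.image (fun x : G => x⁻¹ * g * x)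
theorem mem_cls {g y : G} : y ∈ cls g ↔ ∃ x, x⁻¹ * g * x = y := by simp [cls]

theorem fiber_cls (g x0 : G) :
    (univ.filter (fun x : G => x⁻¹ * g * x = x0⁻¹ * g * x0)).card = Nat.card (cen g) := by
  rw [← card_sub]
  apply Finset.card_bij (fun x _ => x * x0⁻¹)
  · intro x hx
    simp only [mem_filter, mem_univ, true_and, mem_cen] at hx ⊢
    have : g * x = x * (x0⁻¹ * g * x0) := by rw [← hx]; group
    calc x * x0⁻¹ * g = x * (x0⁻¹ * g * x0) * x0⁻¹ := by group
      _ = g * (x * x0⁻¹) := by rw [← this]; group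
  · intro a _ b _ hab; simpa using hab
  · intro s hs
    simp only [mem_filter, mem_univ, true_and, mem_cen] at hs ⊢
    refine ⟨s * x0, ?_, by group⟩
    calc (s * x0)⁻¹ * g * (s * x0) = x0⁻¹ * s⁻¹ * (g * s) * x0 := by group
      _ = x0⁻¹ * g * x0 := by rw [← hs]; group

theorem sum_cls (g : G) (f : G → ℕ) :
    ∑ x : G, f (x⁻¹ * g * x) = Nat.card (cen g) * ∑ y ∈ cls g, f y := by
  rw [← Finset.sum_fiberwise_of_maps_to (s := univ) (t := cls g) (g := fun x => x⁻¹ * g * x)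
    (fun x _ => mem_cls.2 ⟨x, rfl⟩), Finset.mul_sum]
  refine Finset.sum_congr rfl fun y hy => ?_
  obtain ⟨x0, rfl⟩ := mem_cls.1 hy
  rw [Finset.sum_congr rfl (g := fun _ => f (x0⁻¹ * g * x0))]
  · rw [Finset.sum_const, fiber_cls, smul_eq_mul]
  · intro x hx
    simp only [mem_filter, mem_univ, true_and] at hx
    rw [hx]

theorem card_cls (g : G) : Nat.card (cen g) * (cls g).card = Fintype.card G := by
  have := sum_cls g (fun _ => 1)
  simp only [Finset.sum_const, smul_eq_mul, mul_one] at this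
  rw [← this]; rfl

theorem index_cen (g : G) : (cen g).index = (cls g).card := by
  have h1 := card_cls g
  have h2 := Subgroup.card_mul_index (cen g)
  rw [Nat.card_eq_fintype_card (α := G), ← h1] at h2
  exact Nat.eq_of_mul_eq_mul_left Nat.card_pos h2

theorem order3_cases {g : G} (hg : orderOf g = 3) {x : G} (hx : x ∈ Subgroup.zpowers g) :
    x = 1 ∨ x = g ∨ x = g⁻¹ := by
  have hg3 : g ^ 3 = 1 := by rw [← hg]; exact pow_orderOf_eq_one g
  obtain ⟨k, hk, rfl⟩ := (mem_zpowers_iff_mem_range_orderOf.1 hx) |> Finset.mem_image.1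
  rw [hg, Finset.mem_range] at hk
  interval_cases k
  · left; simp
  · right; left; simp
  · right; right
    rw [eq_inv_iff_mul_eq_one, ← pow_succ, hg3]

theorem cube_dvd {x : G} (h : x ^ 3 = 1) (hne : x ≠ 1) : orderOf x = 3 :=
  orderOf_eq_prime h hne

theorem caseB_setup [IsSimpleGroup G] (hna : ¬ ∀ a b : G, a * b = b * a) (h3 : 3 ∣ Fintype.card G)
    (h9 : ¬ 9 ∣ Fintype.card G) : ∃ g : G, orderOf g = 3 ∧ (∃ x, x⁻¹ * g * x = g⁻¹) ∧
      ∀ y, y ^ 3 = 1 → y = 1 ∨ y ∈ cls g := by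
  have hcard : ∀ P : Sylow 3 G, Nat.card P = 3 := by
    intro P
    have h1 : 3 ∣ Nat.card P := P.dvd_card_of_dvd_card (by rwa [Nat.card_eq_fintype_card])
    obtain ⟨k, hk⟩ := IsPGroup.iff_card.1 P.2
    have h2 : Nat.card P ∣ Fintype.card G := by
      rw [← Nat.card_eq_fintype_card]; exact Subgroup.card_subgroup_dvd_card _
    change Nat.card P = _ at hk
    rw [hk] at h1 h2 ⊢
    rcases k with _ | _ | k
    · norm_num at h1
    · norm_num
    · exact absurd ((pow_dvd_pow 3 (by omega : 2 ≤ k + 1 + 1)).trans h2) h9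
  let P : Sylow 3 G := default
  obtain ⟨g0, hg0⟩ := exists_prime_orderOf_dvd_card (G := P) 3 (by rw [← Nat.card_eq_fintype_card, hcard])
  obtain ⟨g, hgP⟩ := g0
  have hg : orderOf g = 3 := by rw [← hg0, Subgroup.orderOf_mk]
  have hPg : (P : Subgroup G) = Subgroup.zpowers g := by
    symm
    apply Subgroup.eq_of_le_of_card_ge
    · rwa [Subgroup.zpowers_le]
    · rw [Nat.card_zpowers, hg]; exact (hcard P).le
  have hreal : ∃ x, x⁻¹ * g * x = g⁻¹ := by
    have hb := burnside hna 3 P (by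
      intro h
      have := hcard P
      change Nat.card (P : Subgroup G) = 3 at this
      rw [h] at this
      simp at this)
    rw [SetLike.not_le_iff_exists] at hb
    obtain ⟨x, hxN, hxC⟩ := hb
    refine ⟨x⁻¹, ?_⟩
    rw [inv_inv]
    have h1 : x * g * x⁻¹ ∈ Subgroup.zpowers g := by
      rw [← hPg]; exact (Subgroup.mem_normalizer_iff.1 hxN g).1 hgP
    rcases order3_cases hg h1 with h | h | h
    · have : g = 1 := by simpa using h
      rw [this] at hg; simp at hg
    · exfalso; apply hxC
      have : x ∈ cen g := by
        rw [mem_cen]; exact mul_inv_eq_iff_eq_mul.1 h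
      rw [Subgroup.mem_centralizer_iff]
      intro q hq
      change q ∈ (P : Subgroup G) at hq
      rw [hPg] at hq
      obtain ⟨k, rfl⟩ := hq
      have hc : Commute g x := (mem_cen.1 this).symm
      exact (hc.zpow_left k).eq
    · exact h
  refine ⟨g, hg, hreal, ?_⟩
  intro y hy
  by_cases hy1 : y = 1
  · left; exact hy1
  right
  have hyo := cube_dvd hy hy1
  have hyP : IsPGroup 3 (Subgroup.zpowers y) := IsPGroup.of_card (n := 1) (by rw [Nat.card_zpowers, hyo]; norm_num)
  obtain ⟨P', hP'⟩ := hyP.exists_le_sylow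
  obtain ⟨c, hc⟩ := MulAction.exists_smul_eq G P' P
  have h1 : c * y * c⁻¹ ∈ (P : Subgroup G) := by
    rw [← hc, Sylow.coe_subgroup_smul]
    have := Subgroup.smul_mem_pointwise_smul y (MulAut.conj c) (P' : Subgroup G) (hP' (Subgroup.mem_zpowers y))
    simpa using this
  rw [hPg] at h1
  rw [mem_cls]
  rcases order3_cases hg h1 with h | h | h
  · exact absurd (by simpa using h) hy1
  · exact ⟨c, by rw [← h]; group⟩
  · obtain ⟨x, hx⟩ := hreal
    refine ⟨x * c, ?_⟩
    have : (x * c)⁻¹ * g * (x * c) = c⁻¹ * (x⁻¹ * g * x) * c := by group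
    rw [this, hx, ← h]; group

theorem cT_le {g : G} (h : ∀ y : G, y ^ 3 = 1 → y = 1 ∨ y ∈ cls g) : cT G ≤ 1 + (cls g).card := by
  have : (univ.filter (fun x : G => x ^ 3 = 1)) ⊆ {1} ∪ cls g := by
    intro y hy
    simp only [mem_filter, mem_univ, true_and] at hy
    simpa using h y hy
  exact (Finset.card_le_card this).trans ((Finset.card_union_le _ _).trans (by simp))

theorem caseB1 [IsSimpleGroup G] (hna : ¬ ∀ a b : G, a * b = b * a) (h9 : ¬ 9 ∣ Fintype.card G) {g : G}
    (hg : orderOf g = 3) (hT : ∀ y : G, y ^ 3 = 1 → y = 1 ∨ y ∈ cls g) (hC : Nat.card (cen g) ≠ 3) :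
    311 * Fintype.card G < 100 * ∑ x : G, orderOf x := by
  by_contra hc
  have hd : Nat.card (cen g) ∣ Fintype.card G := by
    rw [← Nat.card_eq_fintype_card]; exact Subgroup.card_subgroup_dvd_card _
  have h3 : 3 ∣ Nat.card (cen g) := by
    have : Subgroup.zpowers g ≤ cen g := by rw [Subgroup.zpowers_le, mem_cen]
    have := Subgroup.card_dvd_of_le this
    rwa [Nat.card_zpowers, hg] at this
  obtain ⟨k, hk⟩ := h3
  have hk1 : k ≠ 1 := by rintro rfl; exact hC hk
  obtain ⟨p, hp, hpk⟩ := Nat.exists_prime_and_dvd hk1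
  have hp3 : p ≠ 3 := by
    rintro rfl
    obtain ⟨j, rfl⟩ := hpk
    exact h9 (dvd_trans ⟨j, by rw [hk]; ring⟩ hd)
  have := Fact.mk hp
  obtain ⟨⟨u, huC⟩, hu⟩ := exists_prime_orderOf_dvd_card (G := cen g) p (by
    rw [← Nat.card_eq_fintype_card, hk]; exact Dvd.dvd.mul_left hpk 3)
  rw [Subgroup.orderOf_mk] at hu
  have hcom : Commute g u := (mem_cen.1 huC).symm
  have hord : orderOf (g * u) = 3 * p := by
    rw [hcom.orderOf_mul_eq_mul_orderOf_of_coprime, hg, hu]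
    rw [hg, hu]
    exact (Nat.coprime_primes Nat.prime_three hp).2 hp3.symm
  have hle : cen (g * u) ≤ cen g := by
    intro x hx
    rw [mem_cen] at hx
    have h1 : Commute x (g * u) := hx
    have h2 := (h1.pow_right (p * p)).eq
    have h3 : (g * u) ^ (p * p) = g := by
      rw [hcom.mul_pow]
      have : u ^ (p * p) = 1 := by rw [pow_mul, ← hu, pow_orderOf_eq_one, one_pow]
      rw [this, mul_one]
      have h4 : p * p % 3 = 1 := by
        have : p % 3 ≠ 0 := by
          intro h
          exact hp3 ((Nat.prime_dvd_prime_iff_eq Nat.prime_three hp).1 (Nat.dvd_of_mod_eq_zero h)).symm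
        rw [Nat.mul_mod]
        have : p % 3 < 3 := Nat.mod_lt _ (by norm_num)
        interval_cases p % 3 <;> simp_all
      rw [← pow_mod_orderOf, hg, h4, pow_one]
    rw [h3] at h2
    exact mem_cen.2 h2
  have hm : (cls g).card ≤ (cls (g * u)).card := by
    rw [← index_cen, ← index_cen]
    exact Nat.le_of_dvd (Nat.pos_of_ne_zero Subgroup.index_ne_zero_of_finite) (Subgroup.index_dvd_of_le hle)
  have hpt : ∀ x : G, 4 + 2 * (if x ∈ cls (g * u) then 1 else 0) ≤
      orderOf x + 2 * (if x ^ 2 = 1 then 1 else 0) + (if x ^ 3 = 1 then 1 else 0) := by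
    intro x
    split_ifs with h
    all_goals first
      | (obtain ⟨c, rfl⟩ := mem_cls.1 h
         have : orderOf (c⁻¹ * (g * u) * c) = 3 * p := by
           rw [← hord]
           have := orderOf_injective (MulAut.conj c⁻¹).toMonoidHom (MulAut.conj c⁻¹).injective (g * u)
           simpa using this
         have := hp.two_le
         omega)
      | (have := pointwise_order x
         simp_all)
  have hs := Finset.sum_le_sum (fun (x : G) (_ : x ∈ univ) => hpt x)
  simp only [Finset.sum_add_distrib, ← Finset.mul_sum, Finset.sum_const, smul_eq_mul] at hs
  rw [← Finset.card_filter, ← Finset.card_filter, ← Finset.card_filter] at hs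
  have hT' := cT_le hT
  have e1 : (univ.filter (fun x => x ∈ cls (g * u))) = cls (g * u) := by ext; simp
  rw [e1] at hs
  change Fintype.card G * 4 + _ ≤ _ + 2 * cI G + cT G at hs
  apply caseA' hna h9
  omega
end classes


open Finset
set_option linter.unusedSectionVars false
section b2
open scoped Classical
variable {G : Type*} [Group G] [Fintype G]

theorem g_ne_inv {g : G} (hg : orderOf g = 3) : g ≠ g⁻¹ := by
  intro h
  have : g ^ 2 = 1 := by rw [pow_two]; nth_rewrite 2 [h]; simp
  have := orderOf_dvd_of_pow_eq_one this
  rw [hg] at this; norm_num at this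

theorem g_ne_one {g : G} (hg : orderOf g = 3) : g ≠ 1 := by
  rintro rfl; simp at hg

theorem cen_eq_zpowers {g : G} (hg : orderOf g = 3) (hC : Nat.card (cen g) = 3) :
    cen g = Subgroup.zpowers g := by
  symm
  apply Subgroup.eq_of_le_of_card_ge
  · rw [Subgroup.zpowers_le, mem_cen]
  · rw [Nat.card_zpowers, hg, hC]

theorem B2_t {g : G} (hg : orderOf g = 3) (hC : cen g = Subgroup.zpowers g)
    (hreal : ∃ x, x⁻¹ * g * x = g⁻¹) : ∃ t : G, t * t = 1 ∧ t * g * t = g⁻¹ := by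
  obtain ⟨x, hx⟩ := hreal
  have h1 : g * x = x * g⁻¹ := by rw [← hx]; group
  have h1' : g⁻¹ * x = x * g := by
    rw [inv_mul_eq_iff_eq_mul, ← mul_assoc, h1]; simp
  have h2 : x * x ∈ cen g := by
    rw [mem_cen]
    calc x * x * g = x * (x * g) := by group
      _ = x * g⁻¹ * x := by rw [← h1']; group
      _ = g * (x * x) := by rw [← h1]; group
  rw [hC] at h2
  have key : ∀ y : G, x * x = y → (y = g ∨ y = g⁻¹) → False := by
    intro y hy hyg
    have hc : x * y = y * x := by rw [← hy]; group
    have : x * g = g * x := by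
      rcases hyg with rfl | rfl
      · exact hc
      · have : Commute x g⁻¹ := hc
        simpa using this.inv_right.eq
    rw [h1] at this
    exact g_ne_inv hg (mul_left_cancel this)
  rcases order3_cases hg h2 with h | h | h
  · refine ⟨x, h, ?_⟩
    have : x⁻¹ = x := inv_eq_of_mul_eq_one_left h
    rw [← hx, this]
  · exact (key _ h (Or.inl rfl)).elim
  · exact (key _ h (Or.inr rfl)).elim

theorem conj_zpow_of {g t : G} (ht : t * t = 1) (htg : t * g * t = g⁻¹) {a : G}
    (ha : a ∈ Subgroup.zpowers g) : a * t = t * a⁻¹ := by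
  obtain ⟨k, rfl⟩ := ha
  have hti : t⁻¹ = t := inv_eq_of_mul_eq_one_left ht
  have : (t * g * t⁻¹) ^ k = t * g ^ k * t⁻¹ := conj_zpow
  rw [hti, htg] at this
  simp only
  rw [← zpow_neg, ← inv_zpow', this, ← mul_assoc, ← mul_assoc, ht, one_mul]

theorem B2_inv {g t y : G} (hC : cen g = Subgroup.zpowers g) (ht : t * t = 1)
    (htg : t * g * t = g⁻¹) (hy : y * g = g⁻¹ * y) : y * t ∈ Subgroup.zpowers g := by
  rw [← hC, mem_cen]
  have h1 : t * g = g⁻¹ * t := by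
    rw [← htg, mul_assoc, ht, mul_one]
  have h2 : y * g⁻¹ = g * y := by
    rw [mul_inv_eq_iff_eq_mul, mul_assoc, hy]; simp
  rw [mul_assoc, h1, ← mul_assoc, h2, mul_assoc]

noncomputable def cnt (g x : G) : ℕ := (univ.filter (fun a : G => a ∈ Subgroup.zpowers g ∧ (x * a) ^ 2 = 1)).card

theorem cnt_pos {g t x : G} (hg : orderOf g = 3) (hC : cen g = Subgroup.zpowers g) (ht : t * t = 1)
    (htg : t * g * t = g⁻¹) (h : 2 ≤ cnt g x) : 1 ≤ cnt g (x * t) := by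
  obtain ⟨a, ha, b, hb, hab⟩ := Finset.one_lt_card.1 h
  simp only [mem_filter, mem_univ, true_and] at ha hb
  have hcz : a⁻¹ * b ∈ Subgroup.zpowers g := Subgroup.mul_mem _ (Subgroup.inv_mem _ ha.1) hb.1
  set y := x * a with hy
  have hyb : x * b = y * (a⁻¹ * b) := by rw [hy]; group
  rw [hyb] at hb
  have hy2 : y * y = 1 := by rw [← pow_two]; exact ha.2
  have hyinv : y⁻¹ = y := inv_eq_of_mul_eq_one_left hy2
  have hc : y * (a⁻¹ * b) = (a⁻¹ * b)⁻¹ * y := by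
    have := hb.2
    rw [pow_two] at this
    rw [eq_inv_mul_iff_mul_eq]
    have h3 := eq_inv_of_mul_eq_one_left this
    rw [mul_inv_rev, hyinv] at h3
    rw [h3]; group
  have hyg : y * g = g⁻¹ * y := by
    rcases order3_cases hg hcz with h | h | h
    · exact absurd (by rw [inv_mul_eq_one] at h; exact h) hab
    · rwa [h] at hc
    · rw [h, inv_inv, mul_inv_eq_iff_eq_mul] at hc
      rw [eq_inv_mul_iff_mul_eq, ← mul_assoc, ← hc]
  have h4 := B2_inv hC ht htg hyg
  have h5 : x * t ∈ Subgroup.zpowers g := by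
    rw [hy, mul_assoc, conj_zpow_of ht htg ha.1, ← mul_assoc] at h4
    exact (Subgroup.mul_mem_cancel_right _ (Subgroup.inv_mem _ ha.1)).1 h4
  apply Finset.card_pos.2
  refine ⟨(x * t)⁻¹, ?_⟩
  simp only [mem_filter, mem_univ, true_and]
  exact ⟨Subgroup.inv_mem _ h5, by simp⟩

theorem sum_cnt (g : G) (hg : orderOf g = 3) : ∑ x : G, cnt g x = 3 * cI G := by
  have := double_count ⊤ (Subgroup.zpowers g) le_top (fun x : G => x ^ 2 = 1)
  rw [Nat.card_zpowers, hg] at this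
  simp only [Subgroup.mem_top, true_and, Finset.filter_true] at this
  exact this

theorem pair_bound {t e g : G} (hg : orderOf g = 3) (ht : t * t = 1)
    (htg : t * g * t = g⁻¹) (he : e ∈ Subgroup.zpowers g) :
    (univ.filter (fun y : G => y ^ 2 = 1 ∧ (y * (t * e)) ^ 2 = 1)).card ≤
    (univ.filter (fun y : G => y ^ 2 = 1 ∧ y * t = t * y)).card := by
  have h1 := conj_zpow_of ht htg he
  have h3 : e * e * e = 1 := by
    have hg3 : g ^ 3 = 1 := by rw [← hg]; exact pow_orderOf_eq_one g
    rcases order3_cases hg he with rfl | rfl | rfl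
    · simp
    · rw [← pow_two, ← pow_succ]; exact hg3
    · have : (g⁻¹ * g⁻¹ * g⁻¹) = (g ^ 3)⁻¹ := by group
      rw [this, hg3, inv_one]
  have hee : e * e = e⁻¹ := eq_inv_of_mul_eq_one_left h3
  have hte : t * e = e * t * e⁻¹ := by
    rw [h1, mul_assoc, ← hee]
    rw [mul_assoc, ← mul_assoc e e e, h3]
    rw [mul_one]
  have hte1 : (t * e) * (t * e) = 1 := by
    rw [hte]
    calc e * t * e⁻¹ * (e * t * e⁻¹) = e * (t * t) * e⁻¹ := by group
      _ = 1 := by rw [ht]; group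
  apply Finset.card_le_card_of_injOn (fun y => e⁻¹ * y * e)
  · intro y hy
    simp only [Finset.mem_coe, mem_filter, mem_univ, true_and] at hy ⊢
    obtain ⟨hy2, hyt⟩ := hy
    constructor
    · have : (e⁻¹ * y * e)^2 = e⁻¹ * y^2 * e := by rw [pow_two, pow_two]; group
      rw [this, hy2]; group
    · have hyinv : y⁻¹ = y := inv_eq_of_mul_eq_one_left (by rw [← pow_two]; exact hy2)
      have htinv : (t * e)⁻¹ = t * e := inv_eq_of_mul_eq_one_left hte1
      have hc : y * (t * e) = (t * e) * y := by
        rw [pow_two] at hyt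
        have := eq_inv_of_mul_eq_one_left hyt
        rw [mul_inv_rev, hyinv, htinv] at this
        exact this
      rw [hte] at hc
      calc e⁻¹ * y * e * t = e⁻¹ * (y * (e * t * e⁻¹)) * e := by group
        _ = t * (e⁻¹ * y * e) := by rw [hc]; group
  · intro a _ b _ hab
    simpa using hab

theorem sum_cnt_mul {t g : G} (hg : orderOf g = 3) (ht : t * t = 1) (htg : t * g * t = g⁻¹) :
    ∑ x : G, cnt g x * cnt g (x * t) ≤ 9 * (univ.filter (fun y : G => y ^ 2 = 1 ∧ y * t = t * y)).card := by
  set f := (univ.filter (fun y : G => y ^ 2 = 1 ∧ y * t = t * y)).card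
  have e1 : ∀ x, cnt g x = ∑ a ∈ univ.filter (fun a => a ∈ Subgroup.zpowers g), if (x * a) ^ 2 = 1 then 1 else 0 := by
    intro x
    rw [cnt, ← Finset.filter_filter, Finset.card_filter]
  have hz : (univ.filter (fun a => a ∈ Subgroup.zpowers g)).card = 3 := by
    rw [card_sub, Nat.card_zpowers, hg]
  simp_rw [e1, Finset.sum_mul_sum]
  rw [Finset.sum_comm]
  have : ∀ a ∈ univ.filter (fun a => a ∈ Subgroup.zpowers g),
    ∑ x : G, ∑ b ∈ univ.filter (fun a => a ∈ Subgroup.zpowers g),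
      ((if (x * a) ^ 2 = 1 then 1 else 0) * if (x * t * b) ^ 2 = 1 then 1 else 0) ≤ 3 * f := by
    intro a ha
    rw [Finset.sum_comm]
    rw [← hz, ← smul_eq_mul]
    apply Finset.sum_le_card_nsmul
    intro b hb
    simp only [mem_filter, mem_univ, true_and] at ha hb
    refine le_trans ?_ (pair_bound hg ht htg (Subgroup.mul_mem _ ha hb))
    rw [Finset.card_filter, ← Equiv.sum_comp (Equiv.mulRight a⁻¹)]
    apply Finset.sum_le_sum
    intro y _
    have h1 : y * a⁻¹ * t * b = y * (t * (a * b)) := by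
      have := conj_zpow_of ht htg (Subgroup.inv_mem _ ha)
      rw [inv_inv] at this
      rw [mul_assoc y, this]; group
    simp only [Equiv.coe_mulRight, h1, inv_mul_cancel_right]
    split_ifs <;> simp_all
  refine (Finset.sum_le_card_nsmul _ _ _ this).trans ?_
  rw [hz, smul_eq_mul]
  omega

theorem B2_count {t g : G} (hg : orderOf g = 3) (hC : cen g = Subgroup.zpowers g)
    (ht : t * t = 1) (htg : t * g * t = g⁻¹) :
    6 * cI G ≤ Fintype.card G + 9 * (univ.filter (fun y : G => y ^ 2 = 1 ∧ y * t = t * y)).card := by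
  have hpt : ∀ x : G, cnt g x + cnt g (x * t) ≤ 1 + cnt g x * cnt g (x * t) := by
    intro x
    have h1 := cnt_pos (x := x) hg hC ht htg
    have h2 := cnt_pos (x := x * t) hg hC ht htg
    rw [mul_assoc, ht, mul_one] at h2
    generalize cnt g x = a at *
    generalize cnt g (x * t) = b at *
    rcases a with _ | a
    · have : b < 2 := by by_contra h; have := h2 (by omega); omega
      omega
    · rcases b with _ | b
      · have : a + 1 < 2 := by by_contra h; have := h1 (by omega); omega
        omega
      · nlinarith [Nat.zero_le (a * b)]
  have hs := Finset.sum_le_sum (fun (x : G) (_ : x ∈ univ) => hpt x)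
  simp only [Finset.sum_add_distrib, Finset.sum_const, smul_eq_mul, mul_one] at hs
  have h3 := sum_cnt_mul hg ht htg
  have h4 : ∑ x : G, cnt g (x * t) = 3 * cI G := by
    rw [← sum_cnt g hg]
    exact Equiv.sum_comp (Equiv.mulRight t) (fun x => cnt g x)
  rw [sum_cnt g hg, h4] at hs
  change _ ≤ Fintype.card G + _ at hs
  omega
end b2


open Finset
set_option linter.unusedSectionVars false
section b2b
open scoped Classical

theorem sub_top_of_half {H : Type*} [Group H] [Fintype H] (K : Subgroup H)
    (h : Fintype.card H < 2 * Nat.card K) : K = ⊤ := by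
  have h1 := Subgroup.card_mul_index K
  rw [Nat.card_eq_fintype_card (α := H)] at h1
  have hne : K.index ≠ 0 := Subgroup.index_ne_zero_of_finite
  rw [← Subgroup.index_eq_one]
  by_contra hc
  have : 2 ≤ K.index := by omega
  have := Nat.mul_le_mul_left (Nat.card K) this
  omega

theorem exp_two_of {H : Type*} [Group H] [Fintype H] (h : 3 * Fintype.card H < 4 * cI H) :
    ∀ x : H, x ^ 2 = 1 := by
  have hcent : ∀ u : H, u ^ 2 = 1 → ∀ x, x * u = u * x := by
    intro u hu
    have hui : u⁻¹ = u := inv_eq_of_mul_eq_one_left (by rw [← pow_two]; exact hu)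
    let A := univ.filter (fun x : H => x ^ 2 = 1)
    let B := univ.filter (fun x : H => (u * x) ^ 2 = 1)
    have hB : B.card = cI H := by
      apply Finset.card_bij (fun x _ => u * x)
      · intro x hx; simpa [B] using hx
      · intro a _ b _ hab; simpa using hab
      · intro x hx
        refine ⟨u⁻¹ * x, ?_, by simp⟩
        simpa [B] using hx
    have h1 := Finset.card_union_add_card_inter A B
    have h2 : (A ∪ B).card ≤ Fintype.card H := Finset.card_le_univ _
    have h3 : A ∩ B ⊆ univ.filter (fun x => x ∈ cen u) := by
      intro x hx
      simp only [mem_filter, mem_univ, true_and, mem_cen, mem_inter, A, B] at hx ⊢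
      have hxi : x⁻¹ = x := inv_eq_of_mul_eq_one_left (by rw [← pow_two]; exact hx.1)
      have h4 := hx.2
      rw [pow_two] at h4
      have := eq_inv_of_mul_eq_one_left h4
      rw [mul_inv_rev, hui, hxi] at this
      exact this.symm
    have h4 := Finset.card_le_card h3
    rw [card_sub] at h4
    have hA : A.card = cI H := rfl
    have htop := sub_top_of_half (cen u) (by omega)
    intro x
    rw [← mem_cen, htop]; trivial
  let K : Subgroup H :=
    { carrier := {x | x ^ 2 = 1}
      one_mem' := by simp
      mul_mem' := by
        intro a b ha hb
        change a ^ 2 = 1 at ha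
        change b ^ 2 = 1 at hb
        show (a * b) ^ 2 = 1
        have : Commute a b := hcent b hb a
        rw [this.mul_pow, ha, hb, one_mul]
      inv_mem' := by
        intro a ha
        change a ^ 2 = 1 at ha
        show a⁻¹ ^ 2 = 1
        rw [inv_pow, ha, inv_one] }
  have hK : Nat.card K = cI H := by
    rw [← card_sub]; rfl
  have := sub_top_of_half K (by omega)
  intro x
  have hx : x ∈ K := by rw [this]; trivial
  exact hx

variable {G : Type*} [Group G] [Fintype G] [IsSimpleGroup G]

theorem three_fix {G : Type*} [Group G] {t a b c : G} (ht : t * t = 1)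
    (hD : ∀ x, (x = a ∨ x = b ∨ x = c) → (t * x * t = a ∨ t * x * t = b ∨ t * x * t = c))
    (hab : a ≠ b) (hac : a ≠ c) (hbc : b ≠ c) :
    ∃ u, (u = a ∨ u = b ∨ u = c) ∧ t * u * t = u := by
  have inv : ∀ x y, t * x * t = y → t * y * t = x := by
    rintro x y rfl
    calc t * (t * x * t) * t = (t * t) * x * (t * t) := by group
      _ = x := by rw [ht]; group
  have hfun : ∀ x y z, t * x * t = y → t * x * t = z → y = z := fun x y z h1 h2 => h1 ▸ h2
  rcases hD a (by simp) with h | h | h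
  · exact ⟨a, by simp, h⟩
  · rcases hD c (by simp) with h2 | h2 | h2
    · exact absurd (hfun _ _ _ h (inv _ _ h2)) hbc
    · exact absurd (hfun _ _ _ (inv _ _ h) (inv _ _ h2)) hac
    · exact ⟨c, by simp, h2⟩
  · rcases hD b (by simp) with h2 | h2 | h2
    · exact absurd (hfun _ _ _ h (inv _ _ h2)) hbc.symm
    · exact ⟨b, by simp, h2⟩
    · exact absurd (hfun _ _ _ (inv _ _ h) (inv _ _ h2)) hab

theorem B2_six (hna : ¬ ∀ a b : G, a * b = b * a) {t g : G} (hg : orderOf g = 3)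
    (hC : cen g = Subgroup.zpowers g) (ht : t * t = 1) (htg : t * g * t = g⁻¹)
    (h6 : (cls t).card = 6) : False := by
  have hg1 := g_ne_one hg
  have hgi := g_ne_inv hg
  have ht1 : t ≠ 1 := by
    rintro rfl; apply hgi; simpa using htg
  have hti : t⁻¹ = t := inv_eq_of_mul_eq_one_left ht
  have hg3 : g * g * g = 1 := by
    have := pow_orderOf_eq_one g
    rw [hg] at this
    rw [← pow_two, ← pow_succ]; exact this
  have hgg : g * g = g⁻¹ := eq_inv_of_mul_eq_one_left hg3
  have htg' : g * t = t * g⁻¹ := conj_zpow_of ht htg (Subgroup.mem_zpowers g)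
  have htg'' : g⁻¹ * t = t * g := by
    have := conj_zpow_of ht htg (Subgroup.inv_mem _ (Subgroup.mem_zpowers g)); simpa using this
  have hcl : ∀ x y : G, x ∈ cls t → y⁻¹ * x * y ∈ cls t := by
    intro x y hx
    obtain ⟨z, rfl⟩ := mem_cls.1 hx
    exact mem_cls.2 ⟨z * y, by group⟩
  have htc : t ∈ cls t := mem_cls.2 ⟨1, by group⟩
  have hinvo : ∀ x ∈ cls t, x * x = 1 := by
    intro x hx
    obtain ⟨z, rfl⟩ := mem_cls.1 hx
    calc z⁻¹ * t * z * (z⁻¹ * t * z) = z⁻¹ * (t * t) * z := by group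
      _ = 1 := by rw [ht]; group
  have ggi : g⁻¹ * g⁻¹ = g := by rw [← mul_inv_rev, hgg, inv_inv]
  have c1 : g⁻¹ * t * g = t * g⁻¹ := by rw [htg'', mul_assoc, hgg]
  have c2 : g⁻¹ * (t * g) * g = t := by rw [← mul_assoc, htg'', mul_assoc, mul_assoc, hgg]; simp
  have c3 : g⁻¹ * (t * g⁻¹) * g = t * g := by rw [← mul_assoc, htg'']; group
  have d2 : t * (t * g) * t = t * g⁻¹ := by rw [← mul_assoc, ht, one_mul, htg']
  have d3 : t * (t * g⁻¹) * t = t * g := by rw [← mul_assoc, ht, one_mul, htg'']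
  let D1 : Finset G := {t, t * g, t * g⁻¹}
  have hD1 : D1.card = 3 := by
    apply Finset.card_eq_three.2
    refine ⟨t, t * g, t * g⁻¹, ?_, ?_, ?_, rfl⟩
    · intro h; exact hg1 (by simpa using h)
    · intro h; exact hg1 (by simpa using h)
    · intro h; exact hgi (mul_left_cancel h)
  have hD1s : D1 ⊆ cls t := by
    intro x hx
    simp only [D1, mem_insert, mem_singleton] at hx
    have m3 : t * g⁻¹ ∈ cls t := c1 ▸ hcl t g htc
    have m2 : t * g ∈ cls t := c3 ▸ hcl _ g m3
    rcases hx with rfl | rfl | rfl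
    · exact htc
    · exact m2
    · exact m3
  let D2 := cls t \ D1
  have hD2 : D2.card = 3 := by
    rw [Finset.card_sdiff_of_subset hD1s, h6, hD1]
  have hD1g : ∀ x, x ∈ D1 → g⁻¹ * x * g ∈ D1 := by
    intro x hx
    simp only [D1, mem_insert, mem_singleton] at hx ⊢
    rcases hx with rfl | rfl | rfl
    · right; right; exact c1
    · left; exact c2
    · right; left; exact c3
  have hD1t : ∀ x, x ∈ D1 → t * x * t ∈ D1 := by
    intro x hx
    simp only [D1, mem_insert, mem_singleton] at hx ⊢
    rcases hx with rfl | rfl | rfl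
    · left; rw [ht, one_mul]
    · right; right; exact d2
    · right; left; exact d3
  have hD2t : ∀ x, x ∈ D2 → t * x * t ∈ D2 := by
    intro x hx
    simp only [D2, mem_sdiff] at hx ⊢
    refine ⟨by have := hcl x t hx.1; rwa [hti] at this, fun h => hx.2 ?_⟩
    have := hD1t _ h
    have e : t * (t * x * t) * t = (t * t) * x * (t * t) := by group
    rwa [e, ht, one_mul, mul_one] at this
  have hD2g : ∀ x, x ∈ D2 → g⁻¹ * x * g ∈ D2 := by
    intro x hx
    simp only [D2, mem_sdiff] at hx ⊢
    refine ⟨hcl x g hx.1, fun h => hx.2 ?_⟩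
    have := hD1g _ (hD1g _ h)
    have e : g⁻¹ * (g⁻¹ * (g⁻¹ * x * g) * g) * g = (g * g * g)⁻¹ * x * (g * g * g) := by group
    rwa [e, hg3, inv_one, one_mul, mul_one] at this
  obtain ⟨a, b, c, hab, hac, hbc, habc⟩ := Finset.card_eq_three.1 hD2
  have memD2 : ∀ x, x ∈ D2 ↔ (x = a ∨ x = b ∨ x = c) := by intro x; rw [habc]; simp
  obtain ⟨u, huD, hut⟩ := three_fix ht (fun x hx => (memD2 _).1 (hD2t x ((memD2 x).2 hx))) hab hac hbc
  rw [← memD2] at huD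
  have huc : u ∈ cls t := (mem_sdiff.1 huD).1
  have hu1 : u * u = 1 := hinvo u huc
  -- g does not commute with u
  have hnc : u * g ≠ g * u := by
    intro h
    have : u ∈ cen g := mem_cen.2 h
    rw [hC] at this
    rcases order3_cases hg this with h | h | h
    · obtain ⟨z, hz⟩ := mem_cls.1 huc
      rw [h] at hz
      apply ht1
      have : t = z * z⁻¹ := by
        have e : t = z * (z⁻¹ * t * z) * z⁻¹ := by group
        rw [hz, mul_one] at e; exact e
      simpa using this
    · rw [h, hgg] at hu1; exact hg1 (inv_eq_one.1 hu1)
    · rw [h, ggi] at hu1; exact hg1 hu1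
  have e12 : u ≠ g⁻¹ * u * g := by
    intro h; apply hnc
    rw [eq_comm, mul_assoc, inv_mul_eq_iff_eq_mul] at h
    exact h
  have e13 : u ≠ g * u * g⁻¹ := by
    intro h; apply hnc
    rw [eq_mul_inv_iff_mul_eq] at h
    exact h
  have e23 : g⁻¹ * u * g ≠ g * u * g⁻¹ := by
    intro h; apply e12
    have : g⁻¹ * (g⁻¹ * u * g) * g = u := by rw [h]; group
    have e : g⁻¹ * (g⁻¹ * u * g) * g = (g * g)⁻¹ * u * (g * g) := by group
    rw [e, hgg, inv_inv] at this
    rw [h]; exact this.symm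
  have hD2eq : D2 = {u, g⁻¹ * u * g, g * u * g⁻¹} := by
    symm
    apply Finset.eq_of_subset_of_card_le
    · intro x hx
      simp only [mem_insert, mem_singleton] at hx
      rcases hx with rfl | rfl | rfl
      · exact huD
      · exact hD2g _ huD
      · have := hD2g _ (hD2g _ huD)
        have e : g⁻¹ * (g⁻¹ * u * g) * g = (g * g)⁻¹ * u * (g * g) := by group
        rwa [e, hgg, inv_inv] at this
    · rw [hD2, Finset.card_eq_three.2 ⟨_, _, _, e12, e13, e23, rfl⟩]
  have hut' : u * t = t * u := by
    have : t * u * t = u := hut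
    calc u * t = t * u * t * t := by rw [this]
      _ = t * u := by rw [mul_assoc (t * u), ht, mul_one]
  -- elements of the class commuting with t
  have hcomm : ∀ x ∈ cls t, x * t = t * x → x ≠ t → x = u := by
    intro x hx hxt hne
    by_cases hx1 : x ∈ D1
    · simp only [D1, mem_insert, mem_singleton] at hx1
      rcases hx1 with h | h | h
      · exact absurd h hne
      · exfalso
        rw [h, mul_assoc, htg'] at hxt
        exact hgi ((mul_left_cancel (mul_left_cancel hxt)).symm)
      · exfalso
        rw [h, mul_assoc, htg''] at hxt
        exact hgi ((mul_left_cancel (mul_left_cancel hxt)))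
    · have hx2 : x ∈ D2 := mem_sdiff.2 ⟨hx, hx1⟩
      rw [hD2eq] at hx2
      simp only [mem_insert, mem_singleton] at hx2
      have key : t * (g⁻¹ * u * g) * t = g * u * g⁻¹ := by
        calc t * (g⁻¹ * u * g) * t = (t * g⁻¹) * u * (g * t) := by group
          _ = (g * t) * u * (t * g⁻¹) := by rw [htg']
          _ = g * (t * u * t) * g⁻¹ := by group
          _ = _ := by rw [hut]
      have hxt' : t * x * t = x := by rw [← hxt, mul_assoc, ht, mul_one]
      rcases hx2 with h | h | h
      · exact h
      · exfalso
        rw [h, key] at hxt'; exact e23 hxt'.symm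
      · exfalso
        rw [h, ← key] at hxt'
        have e : t * (t * (g⁻¹ * u * g) * t) * t = (t * t) * (g⁻¹ * u * g) * (t * t) := by group
        rw [e, ht, one_mul, mul_one, key] at hxt'
        exact e23 hxt'
  have hutne : u ≠ t := by
    intro h
    apply (mem_sdiff.1 huD).2
    rw [h]; simp [D1]
  have hle : cen t ≤ cen u := by
    intro x hx
    rw [mem_cen] at hx ⊢
    have h1 : x⁻¹ * u * x = u := by
      apply hcomm _ (hcl u x huc)
      · have hx' : x⁻¹ * t * x = t := by rw [mul_assoc, ← hx]; group
        have : x⁻¹ * (u * t) * x = (x⁻¹ * u * x) * (x⁻¹ * t * x) := by group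
        rw [hx'] at this
        rw [← this, hut']
        have : x⁻¹ * (t * u) * x = (x⁻¹ * t * x) * (x⁻¹ * u * x) := by group
        rw [this, hx']
      · intro h
        apply hutne
        calc u = x * (x⁻¹ * u * x) * x⁻¹ := by group
          _ = t := by rw [h, hx]; group
    calc x * u = x * (x⁻¹ * u * x) := by rw [h1]
      _ = u * x := by group
  obtain ⟨x, hx⟩ := mem_cls.1 huc
  have hcls : cls u = cls t := by
    ext y
    simp only [mem_cls]
    constructor
    · rintro ⟨z, rfl⟩
      exact ⟨x * z, by rw [← hx]; group⟩
    · rintro ⟨z, rfl⟩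
      exact ⟨x⁻¹ * z, by rw [← hx]; group⟩
  have heq : cen t = cen u := by
    apply Subgroup.eq_of_le_of_card_ge hle
    have h1 := card_cls t
    have h2 := card_cls u
    rw [hcls, h6] at h2
    rw [h6] at h1
    omega
  let N := Subgroup.normalizer (cen t : Set G)
  have hxN : x⁻¹ ∈ N := by
    rw [Subgroup.mem_normalizer_iff]
    intro h
    rw [inv_inv]
    conv_rhs => rw [heq]
    simp only [mem_cen]
    rw [← hx]
    constructor
    · intro h1
      calc x⁻¹ * h * x * (x⁻¹ * t * x) = x⁻¹ * (h * t) * x := by group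
        _ = _ := by rw [h1]; group
    · intro h1
      calc h * t = x * (x⁻¹ * h * x * (x⁻¹ * t * x)) * x⁻¹ := by group
        _ = _ := by rw [h1]; group
  have hxC : x⁻¹ ∉ cen t := by
    intro h
    apply hutne
    rw [mem_cen] at h
    rw [← hx, h]; group
  have hNle : cen t ≤ N := Subgroup.le_normalizer
  have hind : N.index ∣ 6 := by
    have := Subgroup.index_dvd_of_le hNle
    rwa [index_cen, h6] at this
  have hne6 : N.index ≠ 6 := by
    intro h
    apply hxC
    have : cen t = N := by
      apply Subgroup.eq_of_le_of_card_ge hNle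
      have h1 := Subgroup.card_mul_index N
      have h2 := Subgroup.card_mul_index (cen t)
      rw [index_cen, h6] at h2
      rw [h] at h1
      omega
    rw [this]; exact hxN
  have hN : N = ⊤ := by
    by_contra hc
    have := index_ge_four hna N hc
    have h7 := Nat.le_of_dvd (by norm_num) hind
    interval_cases N.index <;> revert hind hne6 <;> decide
  have hnorm : (cen t).Normal := Subgroup.normalizer_eq_top_iff.1 hN
  rcases hnorm.eq_bot_or_eq_top with h | h
  · have : t ∈ cen t := mem_cen.2 rfl
    rw [h] at this
    exact ht1 (by simpa using this)
  · apply ht1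
    apply eq_one_of_central hna
    intro y
    rw [← mem_cen, h]; trivial

theorem caseB2 (hna : ¬ ∀ a b : G, a * b = b * a) (h9 : ¬ 9 ∣ Fintype.card G) {g : G}
    (hg : orderOf g = 3) (hreal : ∃ x, x⁻¹ * g * x = g⁻¹)
    (hT : ∀ y : G, y ^ 3 = 1 → y = 1 ∨ y ∈ cls g) (hC3 : Nat.card (cen g) = 3) :
    311 * Fintype.card G < 100 * ∑ x : G, orderOf x := by
  by_contra hcon
  have hC := cen_eq_zpowers hg hC3
  obtain ⟨t, ht, htg⟩ := B2_t hg hC hreal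
  have ht1 : t ≠ 1 := by
    rintro rfl; apply g_ne_inv hg; simpa using htg
  have hcount := B2_count hg hC ht htg
  have hst := star_ineq (G := G)
  have hcT := cT_le hT
  have hm := card_cls g
  rw [hC3] at hm
  set f := (univ.filter (fun y : G => y ^ 2 = 1 ∧ y * t = t * y)).card with hf
  have hfc : f ≤ Nat.card (cen t) := by
    rw [← card_sub]
    apply Finset.card_le_card
    intro y hy
    simp only [mem_filter, mem_univ, true_and, mem_cen] at hy ⊢
    exact hy.2
  have hfI : f = cI (cen t) := by
    rw [hf, cI]
    symm
    apply Finset.card_bij (fun (y : cen t) _ => (y : G))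
    · intro y hy
      simp only [mem_filter, mem_univ, true_and] at hy ⊢
      exact ⟨by simpa [Subtype.ext_iff] using hy, mem_cen.1 y.2⟩
    · intro a _ b _ hab; exact Subtype.ext hab
    · intro y hy
      simp only [mem_filter, mem_univ, true_and] at hy
      refine ⟨⟨y, mem_cen.2 hy.2⟩, ?_, rfl⟩
      simp only [mem_filter, mem_univ, true_and, Subtype.ext_iff]
      simpa using hy.1
  have hcd := card_cls t
  have hto : orderOf t = 2 := orderOf_eq_prime (by rw [pow_two]; exact ht) ht1
  have h2c : 2 ∣ Nat.card (cen t) := by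
    have : Subgroup.zpowers t ≤ cen t := by rw [Subgroup.zpowers_le, mem_cen]
    have := Subgroup.card_dvd_of_le this
    rwa [Nat.card_zpowers, hto] at this
  have hct : cen t ≠ ⊤ := by
    intro h
    apply ht1
    apply eq_one_of_central hna
    intro y
    rw [← mem_cen, h]; trivial
  have hd4 := index_ge_four hna _ hct
  rw [index_cen] at hd4
  have h3c : ¬ 3 ∣ Nat.card (cen t) := by
    intro h3
    obtain ⟨⟨s, hs⟩, hso⟩ := exists_prime_orderOf_dvd_card (G := cen t) 3 (by
      rwa [← Nat.card_eq_fintype_card])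
    rw [Subgroup.orderOf_mk] at hso
    have hs1 := g_ne_one hso
    rcases hT s (by rw [← hso]; exact pow_orderOf_eq_one s) with h | h
    · exact hs1 h
    obtain ⟨z, rfl⟩ := mem_cls.1 h
    have h1 : z * t * z⁻¹ ∈ cen g := by
      rw [mem_cen] at hs ⊢
      calc z * t * z⁻¹ * g = z * (t * (z⁻¹ * g * z)) * z⁻¹ := by group
        _ = z * ((z⁻¹ * g * z) * t) * z⁻¹ := by rw [hs]
        _ = _ := by group
    have h2 : orderOf (z * t * z⁻¹) = 2 := by
      rw [← hto]
      have := orderOf_injective (MulAut.conj z).toMonoidHom (MulAut.conj z).injective t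
      simpa using this
    have h4 := Subgroup.orderOf_dvd_natCard _ h1
    rw [h2, hC3] at h4
    norm_num at h4
  have h3d : 3 ∣ (cls t).card := by
    have : 3 ∣ Nat.card (cen t) * (cls t).card := by rw [hcd]; exact ⟨_, hm.symm⟩
    exact (Nat.Prime.dvd_mul Nat.prime_three |>.1 this).resolve_left h3c
  have hcpos : 0 < Nat.card (cen t) := Nat.card_pos
  have hmain : 67 * Fintype.card G ≤ 900 * f + 300 := by omega
  by_cases hd : 15 ≤ (cls t).card
  · have h1 : Nat.card (cen t) * 15 ≤ Fintype.card G := by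
      rw [← hcd]; exact Nat.mul_le_mul_left _ hd
    have h2 : Nat.card (cen t) = 2 := by omega
    rw [h2] at hcd
    have h30 : Fintype.card G = 30 := by omega
    let P : Sylow 2 G := default
    have hPc : Nat.card P = 2 := by
      have h1 : 2 ∣ Nat.card P := P.dvd_card_of_dvd_card (by rw [Nat.card_eq_fintype_card, h30]; norm_num)
      obtain ⟨k, hk⟩ := IsPGroup.iff_card.1 P.2
      have h2 : Nat.card P ∣ Fintype.card G := by
        rw [← Nat.card_eq_fintype_card]; exact Subgroup.card_subgroup_dvd_card _
      change Nat.card P = _ at hk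
      rw [hk, h30] at h2
      rw [hk] at h1 ⊢
      rcases k with _ | _ | k
      · norm_num at h1
      · norm_num
      · have := (pow_dvd_pow 2 (by omega : 2 ≤ k + 1 + 1)).trans h2
        norm_num at this
    have hcyc : IsCyclic P := isCyclic_of_prime_card hPc
    apply burnside hna 2 P
    · intro h
      change Nat.card (P : Subgroup G) = 2 at hPc
      rw [h] at hPc; simp at hPc
    · exact IsCyclic.normalizer_le_centralizer (by rw [Nat.card_eq_fintype_card, h30]; norm_num) hcyc
  · have hcases : (cls t).card = 6 ∨ (cls t).card = 9 ∨ (cls t).card = 12 := by omega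
    rcases hcases with h | h | h
    · exact B2_six hna hg hC ht htg h
    · exact h9 ⟨Nat.card (cen t), by rw [← hcd, h]; ring⟩
    · rw [h] at hcd
      have hexp := exp_two_of (H := cen t) (by
        rw [← hfI, ← Nat.card_eq_fintype_card]; omega)
      obtain ⟨p, hp, hp5, hpd⟩ := exists_prime_ge_five hna h9
      rw [← hcd] at hpd
      rcases (hp.dvd_mul).1 hpd with h5 | h5
      · have := Fact.mk hp
        obtain ⟨x, hx⟩ := exists_prime_orderOf_dvd_card (G := cen t) p (by
          rwa [← Nat.card_eq_fintype_card])
        have := orderOf_dvd_of_pow_eq_one (hexp x)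
        rw [hx] at this
        have := Nat.le_of_dvd (by norm_num) this
        omega
      · have h6 : p ∣ 2 * 2 * 3 := h5
        rcases (hp.dvd_mul).1 h6 with h7 | h7
        · rcases (hp.dvd_mul).1 h7 with h8 | h8 <;>
          · have := Nat.le_of_dvd (by norm_num) h8
            omega
        · have := Nat.le_of_dvd (by norm_num) h7
          omega

theorem caseB (hna : ¬ ∀ a b : G, a * b = b * a) (h3 : 3 ∣ Fintype.card G)
    (h9 : ¬ 9 ∣ Fintype.card G) : 311 * Fintype.card G < 100 * ∑ x : G, orderOf x := by
  obtain ⟨g, hg, hreal, hT⟩ := caseB_setup hna h3 h9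
  by_cases hC : Nat.card (cen g) = 3
  · exact caseB2 hna h9 hg hreal hT hC
  · exact caseB1 hna h9 hg hT hC
end b2b


open Finset
set_option linter.unusedSectionVars false
theorem bool_ineq : ∀ i0 i1 i2 t0 t1 t2 : Bool,
    (i0 && i1 → i2) → (i1 && i2 → i0) → (i2 && i0 → i1) →
    (i0 && i1 → !t0) → (i1 && i2 → !t1) → (i2 && i0 → !t2) →
    (i0 → t1 = t2) → (i1 → t2 = t0) → (i2 → t0 = t1) →
    (i0 && t0 → t1) → (i1 && t1 → t2) → (i2 && t2 → t0) →
    2 * (i0.toNat + i1.toNat + i2.toNat) + (t0.toNat + t1.toNat + t2.toNat) ≤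
    2 + 4 * (i0 && i1).toNat + 2 * ((i0 && t1).toNat + (i1 && t2).toNat + (i2 && t0).toNat)
      + (t0 && t1 && t2).toNat := by
  intro i0 i1 i2 t0 t1 t2
  cases i0 <;> cases i1 <;> cases i2 <;> cases t0 <;> cases t1 <;> cases t2 <;> simp

section cosets
open scoped Classical
variable {G : Type*} [Group G] [Fintype G]

theorem inv_of_sq {y : G} (h : y ^ 2 = 1) : y⁻¹ = y :=
  inv_eq_of_mul_eq_one_left (by rw [← pow_two]; exact h)

theorem cube_inv {y : G} (h : y ^ 3 = 1) : y⁻¹ ^ 3 = 1 := by rw [inv_pow, h, inv_one]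

theorem cube_conj {y : G} (z : G) (h : y ^ 3 = 1) : (z * y * z⁻¹) ^ 3 = 1 := by
  rw [conj_pow, h]; group

theorem cF1 {g y : G} (h1 : y ^ 2 = 1) (h2 : (y * g) ^ 2 = 1) : (y * g⁻¹) ^ 2 = 1 := by
  have hy := inv_of_sq h1
  have h3 := inv_of_sq h2
  rw [mul_inv_rev, hy] at h3
  have h4 : y * g⁻¹ = g * y := by rw [mul_inv_eq_iff_eq_mul, mul_assoc, ← h3]; simp
  have : (y * g⁻¹)^2 = (y * g⁻¹) * (y * g⁻¹) := pow_two _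
  rw [this]; nth_rewrite 2 [h4]
  rw [mul_assoc, inv_mul_cancel_left, ← pow_two, h1]

theorem cF3 {g y : G} (h1 : y ^ 2 = 1) (h2 : (y * g) ^ 3 = 1) : (y * g⁻¹) ^ 3 = 1 := by
  have hy := inv_of_sq h1
  have h3 := cube_conj y (cube_inv h2)
  have : y * (y * g)⁻¹ * y⁻¹ = y * g⁻¹ := by
    have : y * (y * g)⁻¹ * y⁻¹ = y * g⁻¹ * (y ^ 2)⁻¹ := by rw [pow_two]; group
    rw [this, h1]; simp
  rwa [this] at h3

theorem cF_one {y : G} (h1 : y ^ 2 = 1) (h2 : y ^ 3 = 1) : y = 1 := by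
  rw [pow_succ, h1, one_mul] at h2; exact h2

noncomputable def sA (g : G) : Finset G := univ.filter (fun x => x ^ 2 = 1 ∧ (x * g) ^ 2 = 1)
noncomputable def sB (g : G) : Finset G := univ.filter (fun x => x ^ 2 = 1 ∧ (x * g) ^ 3 = 1)
noncomputable def sC (g : G) : Finset G :=
  univ.filter (fun x => x ^ 3 = 1 ∧ (x * g) ^ 3 = 1 ∧ (x * g⁻¹) ^ 3 = 1)

theorem coset_pointwise {g : G} (hg : orderOf g = 3) (x : G) :
    2 * ((if x ^ 2 = 1 then 1 else 0) + (if (x * g) ^ 2 = 1 then 1 else 0) + (if (x * g⁻¹) ^ 2 = 1 then 1 else 0))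
    + ((if x ^ 3 = 1 then 1 else 0) + (if (x * g) ^ 3 = 1 then 1 else 0) + (if (x * g⁻¹) ^ 3 = 1 then 1 else 0))
    ≤ 2 + 4 * (if x ∈ sA g then 1 else 0) + 2 * ((if x ∈ sB g then 1 else 0)
       + (if x * g ∈ sB g then 1 else 0) + (if x * g⁻¹ ∈ sB g then 1 else 0))
       + (if x ∈ sC g then 1 else 0) := by
  have hg3 : g ^ 3 = 1 := by rw [← hg]; exact pow_orderOf_eq_one g
  have hg2 : ¬ g ^ 2 = 1 := by
    intro h
    exact g_ne_one hg (cF_one h hg3)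
  have hgi3 := cube_inv hg3
  have hgg : g * g = g⁻¹ := eq_inv_of_mul_eq_one_left (by rw [← pow_two, ← pow_succ]; exact hg3)
  have hggi : g⁻¹ * g⁻¹ = g := by rw [← mul_inv_rev, hgg, inv_inv]
  have a1 : x * g * g = x * g⁻¹ := by rw [mul_assoc, hgg]
  have a2 : x * g⁻¹ * g⁻¹ = x * g := by rw [mul_assoc, hggi]
  have a3 : x * g * g⁻¹ = x := by group
  have a4 : x * g⁻¹ * g = x := by group
  have key := bool_ineq (decide (x ^ 2 = 1)) (decide ((x * g) ^ 2 = 1)) (decide ((x * g⁻¹) ^ 2 = 1))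
    (decide (x ^ 3 = 1)) (decide ((x * g) ^ 3 = 1)) (decide ((x * g⁻¹) ^ 3 = 1))
  have F1 : ∀ y : G, y ^ 2 = 1 → (y * g) ^ 2 = 1 → (y * g⁻¹) ^ 2 = 1 := fun y => cF1
  have F1' : ∀ y : G, y ^ 2 = 1 → (y * g⁻¹) ^ 2 = 1 → (y * g) ^ 2 = 1 := fun y h1 h2 => by
    have := cF1 h1 h2; rwa [inv_inv] at this
  have F2 : ∀ y : G, y ^ 2 = 1 → (y * g) ^ 2 = 1 → ¬ y ^ 3 = 1 := fun y h1 h2 h3 => by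
    rw [cF_one h1 h3, one_mul] at h2; exact hg2 h2
  have F3 : ∀ y : G, y ^ 2 = 1 → ((y * g) ^ 3 = 1 ↔ (y * g⁻¹) ^ 3 = 1) := fun y h1 =>
    ⟨cF3 h1, fun h2 => by have := cF3 h1 h2; rwa [inv_inv] at this⟩
  have F4 : ∀ y : G, y ^ 2 = 1 → y ^ 3 = 1 → (y * g) ^ 3 = 1 := fun y h1 h2 => by
    rw [cF_one h1 h2, one_mul]; exact hg3
  have k2 := F1 (x * g)
  have k3 := F1' (x * g⁻¹)
  have k22 := F2 (x * g)
  have k23 := F2 (x * g⁻¹)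
  have k32 := F3 (x * g)
  have k33 := F3 (x * g⁻¹)
  have k42 := F4 (x * g)
  have k43 := F4 (x * g⁻¹)
  rw [a1, a3] at k2
  rw [a2, a4] at k3
  rw [a1] at k22
  rw [a4] at k23
  rw [a1, a3] at k32
  rw [a2, a4] at k33
  rw [a1] at k42
  rw [a4] at k43
  have key2 := key
    (by simpa using F1 x)
    (by simpa using k2)
    (by simp only [Bool.and_eq_true, decide_eq_true_eq]; exact fun h => F1' x h.2 h.1)
    (by simpa using F2 x)
    (by simpa using k22)
    (by simpa using k23)
    (by simpa using F3 x)
    (by simpa using k32)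
    (by simpa using k33)
    (by simpa using F4 x)
    (by simpa using k42)
    (by simpa using k43)
  have toN : ∀ (p : Prop) [Decidable p], (decide p).toNat = if p then 1 else 0 := by
    intro p _; by_cases h : p <;> simp [h]
  simp only [← Bool.decide_and, toN] at key2
  simp only [sA, sB, sC, mem_filter, mem_univ, true_and, a1, a4]
  simpa only [and_assoc] using key2

theorem sum_shift (P : G → Prop) [DecidablePred P] (c : G) :
    ∑ x : G, (if P (x * c) then 1 else 0) = (univ.filter P).card := by
  rw [Finset.card_filter]
  exact Equiv.sum_comp (Equiv.mulRight c) (fun x => if P x then 1 else 0)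

theorem coset_count {g : G} (hg : orderOf g = 3) :
    3 * (2 * cI G + cT G) ≤ 2 * Fintype.card G + 4 * (sA g).card + 6 * (sB g).card + (sC g).card := by
  have hs := Finset.sum_le_sum (fun (x : G) (_ : x ∈ univ) => coset_pointwise hg x)
  simp only [Finset.sum_add_distrib, ← Finset.mul_sum, Finset.sum_const, smul_eq_mul] at hs
  have e1 := sum_shift (fun x : G => x ^ 2 = 1) g
  have e2 := sum_shift (fun x : G => x ^ 2 = 1) g⁻¹
  have e3 := sum_shift (fun x : G => x ^ 3 = 1) g
  have e4 := sum_shift (fun x : G => x ^ 3 = 1) g⁻¹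
  have e5 := sum_shift (fun x : G => x ∈ sB g) g
  have e6 := sum_shift (fun x : G => x ∈ sB g) g⁻¹
  rw [e1, e2, e3, e4, e5, e6] at hs
  simp only [← Finset.card_filter] at hs
  simp only [Finset.filter_mem_eq_inter, Finset.univ_inter] at hs
  change 2 * (cI G + cI G + cI G) + (cT G + cT G + cT G) ≤ Fintype.card G * 2 + _ + _ + _ at hs
  omega

theorem coset_main {g : G} (hg : orderOf g = 3)
    (h : ¬ 311 * Fintype.card G < 100 * ∑ x : G, orderOf x) :
    67 * Fintype.card G ≤ 400 * (sA g).card + 600 * (sB g).card + 100 * (sC g).card := by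
  have h1 := coset_count hg
  have h2 := star_ineq (G := G)
  omega

theorem sA_inv {g x : G} (hx : x ∈ sA g) : x⁻¹ * g * x = g⁻¹ := by
  simp only [sA, mem_filter, mem_univ, true_and] at hx
  have hy := inv_of_sq hx.1
  have h3 := inv_of_sq hx.2
  rw [mul_inv_rev, hy] at h3
  rw [hy, ← h3, mul_assoc, ← pow_two, hx.1, mul_one]

theorem sA_le (g : G) : (sA g).card ≤ Nat.card (cen g) := by
  rcases Finset.eq_empty_or_nonempty (sA g) with h | ⟨x0, h0⟩
  · rw [h]; simp
  rw [← fiber_cls g x0]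
  apply Finset.card_le_card
  intro x hx
  simp only [mem_filter, mem_univ, true_and]
  rw [sA_inv hx, sA_inv h0]

theorem sA_empty {g : G} (h : ∀ x, x⁻¹ * g * x ≠ g⁻¹) : (sA g).card = 0 := by
  rw [Finset.card_eq_zero, Finset.eq_empty_iff_forall_notMem]
  exact fun x hx => h x (sA_inv hx)

theorem sB_formula {g x : G} (hx : x ∈ sB g) : x = g * (x⁻¹ * g * x) * g := by
  simp only [sB, mem_filter, mem_univ, true_and] at hx
  have hi := inv_of_sq hx.1
  have h2 := hx.2
  have h3 : g * (x⁻¹ * g * x) * g * x = 1 := by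
    rw [hi]
    have : (x * g) ^ 3 = x * (g * (x * g * x) * g * x) * x⁻¹ := by
      rw [pow_succ, pow_two]; group
    rw [this] at h2
    have := mul_inv_eq_one.1 h2
    simpa using this
  have := eq_inv_of_mul_eq_one_left h3
  rw [hi] at this ⊢
  exact this.symm

theorem sB_good {g x : G} (hg : orderOf g = 3) (hx : x ∈ sB g) :
    (x⁻¹ * g * x) * g⁻¹ * (x⁻¹ * g * x) = g := by
  have hf := sB_formula hx
  simp only [sB, mem_filter, mem_univ, true_and] at hx
  have hg3 : g ^ 3 = 1 := by rw [← hg]; exact pow_orderOf_eq_one g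
  have hgg : g * g = g⁻¹ := eq_inv_of_mul_eq_one_left (by rw [← pow_two, ← pow_succ]; exact hg3)
  have h1 := hx.1
  set y := x⁻¹ * g * x
  rw [hf, pow_two] at h1
  have h2 : g * (y * (g * g) * y) * g = 1 := by rw [← h1]; group
  rw [hgg] at h2
  have h3 : y * g⁻¹ * y = g⁻¹ * (g * (y * g⁻¹ * y) * g) * g⁻¹ := by group
  rw [h3, h2, mul_one, ← mul_inv_rev, hgg, inv_inv]

theorem sB_inj (g : G) : Set.InjOn (fun x => x⁻¹ * g * x) (sB g : Set G) := by
  intro a ha b hb hab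
  simp only at hab
  rw [sB_formula ha, sB_formula hb, hab]

theorem sB_le (g : G) : (sB g).card ≤ (cls g).card :=
  Finset.card_le_card_of_injOn (fun x => x⁻¹ * g * x) (fun x _ => mem_cls.2 ⟨x, rfl⟩) (sB_inj g)

theorem sB_le_real {g : G} (hg : orderOf g = 3) (hr : ∃ x, x⁻¹ * g * x = g⁻¹) :
    2 * (sB g).card ≤ (cls g).card := by
  obtain ⟨c, hc⟩ := hr
  let Y := (sB g).image (fun x => x⁻¹ * g * x)
  let Z := (sB g).image (fun x => (x⁻¹ * g * x)⁻¹)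
  have hY : Y.card = (sB g).card := Finset.card_image_of_injOn (sB_inj g)
  have hZ : Z.card = (sB g).card := Finset.card_image_of_injOn (by
    intro a ha b hb hab
    exact sB_inj g ha hb (inv_injective hab))
  have hYs : Y ⊆ cls g := by
    intro y hy
    obtain ⟨x, _, rfl⟩ := Finset.mem_image.1 hy
    exact mem_cls.2 ⟨x, rfl⟩
  have hZs : Z ⊆ cls g := by
    intro y hy
    obtain ⟨x, _, rfl⟩ := Finset.mem_image.1 hy
    refine mem_cls.2 ⟨c * x, ?_⟩
    have : (c * x)⁻¹ * g * (c * x) = x⁻¹ * (c⁻¹ * g * c) * x := by group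
    rw [this, hc]; group
  have hdis : Disjoint Y Z := by
    rw [Finset.disjoint_left]
    intro y h1 h2
    obtain ⟨x, hx, rfl⟩ := Finset.mem_image.1 h1
    obtain ⟨z, hz, hzx⟩ := Finset.mem_image.1 h2
    have g1 := sB_good hg hx
    have g2 := sB_good hg hz
    have hyo : (x⁻¹ * g * x) ^ 3 = 1 := by
      have := cube_conj x⁻¹ (by rw [← hg]; exact pow_orderOf_eq_one g : g ^ 3 = 1)
      rwa [inv_inv] at this
    have hzx' : z⁻¹ * g * z = (x⁻¹ * g * x)⁻¹ := by rw [← hzx, inv_inv]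
    rw [hzx'] at g2
    generalize x⁻¹ * g * x = y at *
    have hyy : y * y = y⁻¹ := eq_inv_of_mul_eq_one_left (by rw [← pow_two, ← pow_succ]; exact hyo)
    have g3 : y⁻¹ * g * y⁻¹ = g⁻¹ := by
      have := congrArg (·⁻¹) g1
      simp only [mul_inv_rev, inv_inv] at this
      rw [← this]; group
    have g4 : y * g * y = g⁻¹ := by
      have := congrArg (·⁻¹) g2
      simp only [mul_inv_rev, inv_inv] at this
      rw [← this]; group
    have g5 : y⁻¹ * g * y⁻¹ = g := by
      rw [← hyy]
      calc y * y * g * (y * y) = y * (y * g * y) * y := by group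
        _ = y * (y⁻¹ * g * y⁻¹) * y := by rw [g4, g3]
        _ = g := by group
    exact g_ne_inv hg (g5.symm.trans g3)
  have := Finset.card_union_of_disjoint hdis
  have h2 := Finset.card_le_card (Finset.union_subset hYs hZs)
  omega

theorem sC_facts {g x : G} (hx : x ∈ sC g) :
    (x⁻¹ * g * x) * g = g * (x⁻¹ * g * x) ∧ x⁻¹ * (x⁻¹ * g * x) * x = ((x⁻¹ * g * x) * g)⁻¹ := by
  simp only [sC, mem_filter, mem_univ, true_and] at hx
  obtain ⟨h0, h1, h2⟩ := hx
  have hxx : x * x = x⁻¹ := eq_inv_of_mul_eq_one_left (by rw [← pow_two, ← pow_succ]; exact h0)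
  have hz : x⁻¹ * (x⁻¹ * g * x) * x = x * g * x⁻¹ := by
    have hxi : x⁻¹ * x⁻¹ = x := by rw [← mul_inv_rev, hxx, inv_inv]
    calc x⁻¹ * (x⁻¹ * g * x) * x = (x⁻¹ * x⁻¹) * g * (x * x) := by group
      _ = _ := by rw [hxi, hxx]
  rw [hz]
  have e : ∀ k : G, (x * k) ^ 3 = 1 → x * k * x⁻¹ = ((x⁻¹ * k * x) * k)⁻¹ := by
    intro k hk
    rw [pow_succ, pow_two] at hk
    have h5 : x * k * x⁻¹ * ((x⁻¹ * k * x) * k) = x * k * (x * k) * (x * k) := by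
      calc x * k * x⁻¹ * ((x⁻¹ * k * x) * k) = x * k * (x⁻¹ * x⁻¹) * k * x * k := by group
        _ = _ := by
          have hxi : x⁻¹ * x⁻¹ = x := by rw [← mul_inv_rev, hxx, inv_inv]
          rw [hxi]; group
    rw [hk] at h5
    exact eq_inv_of_mul_eq_one_left h5
  have h3 := e g h1
  have h4 := e g⁻¹ h2
  have h5 := congrArg (·⁻¹) h4
  simp only [inv_inv] at h5
  have h6 : x * g * x⁻¹ = (g * (x⁻¹ * g * x))⁻¹ := by
    calc x * g * x⁻¹ = (x * g⁻¹ * x⁻¹)⁻¹ := by group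
      _ = _ := by rw [h5]; group
  refine ⟨?_, h3⟩
  rw [h3] at h6
  exact inv_injective h6

theorem sC_fiber {g y : G} :
    ((sC g).filter (fun x => x⁻¹ * g * x = y)).card ≤ Nat.card (cen g ⊓ cen y : Subgroup G) := by
  rcases Finset.eq_empty_or_nonempty ((sC g).filter (fun x => x⁻¹ * g * x = y)) with h | ⟨x0, h0⟩
  · rw [h]; simp
  rw [← card_sub]
  rw [Finset.mem_filter] at h0
  apply Finset.card_le_card_of_injOn (fun x => x * x0⁻¹)
  · intro x hx
    rw [Finset.mem_coe, Finset.mem_filter] at hx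
    have a1 := (sC_facts hx.1).2
    have b1 := (sC_facts h0.1).2
    rw [hx.2] at a1
    rw [h0.2] at b1
    have conv : ∀ k l : G, x⁻¹ * k * x = l → x0⁻¹ * k * x0 = l → x * x0⁻¹ ∈ cen k := by
      intro k l h1 h2
      rw [mem_cen]
      calc x * x0⁻¹ * k = x * (x0⁻¹ * k * x0) * x0⁻¹ := by group
        _ = x * (x⁻¹ * k * x) * x0⁻¹ := by rw [h2, h1]
        _ = _ := by group
    simp only [Finset.mem_coe, mem_filter, mem_univ, true_and]
    exact ⟨conv g y hx.2 h0.2, conv y _ a1 b1⟩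
  · intro a _ b _ hab; simpa using hab

theorem sC_le (g : G) : (sC g).card ≤ ∑ y ∈ cls g, Nat.card (cen g ⊓ cen y : Subgroup G) := by
  rw [Finset.card_eq_sum_card_fiberwise (t := cls g) (f := fun x => x⁻¹ * g * x)
    (fun x _ => mem_cls.2 ⟨x, rfl⟩)]
  exact Finset.sum_le_sum fun y _ => sC_fiber

theorem sC_le_real {g : G} (hg : orderOf g = 3) (hr : ∃ x, x⁻¹ * g * x = g⁻¹) :
    (sC g).card + Nat.card (cen g) ≤ ∑ y ∈ cls g, Nat.card (cen g ⊓ cen y : Subgroup G) := by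
  have hmem : g⁻¹ ∈ cls g := mem_cls.2 hr
  rw [Finset.card_eq_sum_card_fiberwise (t := cls g) (f := fun x => x⁻¹ * g * x)
    (fun x _ => mem_cls.2 ⟨x, rfl⟩)]
  rw [← Finset.add_sum_erase _ _ hmem, ← Finset.add_sum_erase _ _ hmem]
  have h0 : ((sC g).filter (fun x => x⁻¹ * g * x = g⁻¹)) = ∅ := by
    rw [Finset.eq_empty_iff_forall_notMem]
    intro x hx
    rw [Finset.mem_filter] at hx
    have := (sC_facts hx.1).2
    rw [hx.2] at this
    simp only [inv_mul_cancel, inv_one] at this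
    have h2 : g⁻¹ = x * (x⁻¹ * g⁻¹ * x) * x⁻¹ := by group
    rw [this] at h2
    exact g_ne_one hg (by simpa using h2)
  have h1 : (cen g ⊓ cen g⁻¹ : Subgroup G) = cen g := by
    rw [inf_eq_left]
    intro x hx
    rw [mem_cen] at hx ⊢
    have : Commute x g := hx
    exact this.inv_right.eq
  rw [h0, h1, Finset.card_empty, zero_add, add_comm]
  apply Nat.add_le_add_left
  exact Finset.sum_le_sum fun y _ => sC_fiber
end cosets


open Finset
set_option linter.unusedSectionVars false
section caseC
open scoped Classical
variable {G : Type*} [Group G] [Fintype G]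

theorem mem_normalizer_of_zpowers {g x : G} (h : x⁻¹ * g * x = g⁻¹) :
    x ∈ Subgroup.normalizer (Subgroup.zpowers g : Set G) := by
  have h1 : x * g * x⁻¹ = g⁻¹ := by
    have : g = x * (x⁻¹ * g * x) * x⁻¹ := by group
    rw [h] at this
    have h2 := congrArg (·⁻¹) this
    simp only [mul_inv_rev, inv_inv] at h2
    rw [h2]; group
  rw [Subgroup.mem_normalizer_iff]
  intro y
  constructor
  · intro hy
    obtain ⟨k, hk⟩ := Subgroup.mem_zpowers_iff.1 hy
    have e : x * y * x⁻¹ = g⁻¹ ^ k := by rw [← hk, ← h1, conj_zpow]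
    rw [e]
    exact Subgroup.zpow_mem _ (inv_mem (Subgroup.mem_zpowers g)) k
  · intro hy
    obtain ⟨k, hk⟩ := Subgroup.mem_zpowers_iff.1 hy
    have e : y = g⁻¹ ^ k := by
      have : y = x⁻¹ * (x * y * x⁻¹) * x := by group
      have h3 := conj_zpow (i := k) (a := x⁻¹) (b := g)
      rw [inv_inv] at h3
      rw [this, ← hk, ← h3, h]
    rw [e]
    exact Subgroup.zpow_mem _ (inv_mem (Subgroup.mem_zpowers g)) k

theorem real_index [IsSimpleGroup G] (hna : ¬ ∀ a b : G, a * b = b * a) {g : G} (hg : orderOf g = 3)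
    (hr : ∃ x, x⁻¹ * g * x = g⁻¹) :
    ∃ b r, (cls g).card = b * r ∧ 2 ≤ r ∧ Fintype.card G ∣ b.factorial := by
  obtain ⟨x, hx⟩ := hr
  set N := Subgroup.normalizer (Subgroup.zpowers g : Set G) with hN
  have hNtop : N ≠ ⊤ := by
    intro h
    have hn : (Subgroup.zpowers g).Normal := Subgroup.normalizer_eq_top_iff.1 h
    rcases hn.eq_bot_or_eq_top with h1 | h1
    · exact g_ne_one hg (Subgroup.zpowers_eq_bot.1 h1)
    · apply hna
      intro a b
      have ha : a ∈ Subgroup.zpowers g := by rw [h1]; trivial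
      have hb : b ∈ Subgroup.zpowers g := by rw [h1]; trivial
      obtain ⟨i, rfl⟩ := Subgroup.mem_zpowers_iff.1 ha
      obtain ⟨j, rfl⟩ := Subgroup.mem_zpowers_iff.1 hb
      rw [← zpow_add, ← zpow_add, add_comm]
  have hle : cen g ≤ N := by
    intro y hy
    rw [mem_cen] at hy
    rw [hN, Subgroup.mem_normalizer_iff]
    have hc : ∀ k : ℤ, y * g ^ k * y⁻¹ = g ^ k := by
      intro k
      have : Commute y g := hy
      rw [(this.zpow_right k).eq]; group
    intro z
    constructor
    · intro hz
      obtain ⟨k, rfl⟩ := Subgroup.mem_zpowers_iff.1 hz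
      rw [hc]; exact Subgroup.zpow_mem _ (Subgroup.mem_zpowers g) k
    · intro hz
      obtain ⟨k, hk⟩ := Subgroup.mem_zpowers_iff.1 hz
      have : z = y⁻¹ * (y * z * y⁻¹) * y := by group
      rw [this, ← hk, ← hc k]
      simp only [mul_assoc, inv_mul_cancel_left, inv_mul_cancel, mul_one]
      exact Subgroup.zpow_mem _ (Subgroup.mem_zpowers g) k
  refine ⟨N.index, (cen g).relIndex N, ?_, ?_, index_fact N hNtop⟩
  · rw [← index_cen, ← Subgroup.relIndex_mul_index hle, mul_comm]
  · by_contra hlt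
    have h0 : (cen g).relIndex N ≠ 0 := Subgroup.index_ne_zero_of_finite
    have h1 : (cen g).relIndex N = 1 := by omega
    have h2 := Subgroup.relIndex_eq_one.1 h1
    have h3 := h2 (mem_normalizer_of_zpowers hx)
    rw [mem_cen] at h3
    apply g_ne_inv hg
    rw [← hx, mul_assoc, ← h3]; group

theorem card_sylow9 (h9 : 9 ∣ Fintype.card G) (h27 : ¬ 27 ∣ Fintype.card G) [Fact (Nat.Prime 3)]
    (P : Sylow 3 G) : Nat.card P = 3 ^ 2 := by
  have h1 : 3 ^ 2 ∣ Nat.card P := P.pow_dvd_card_of_pow_dvd_card (by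
    rw [Nat.card_eq_fintype_card]; exact h9)
  obtain ⟨k, hk⟩ := IsPGroup.iff_card.1 P.2
  have hk' : Nat.card P = 3 ^ k := hk
  rw [hk'] at h1 ⊢
  have h2 : 2 ≤ k := (Nat.pow_dvd_pow_iff_le_right (by norm_num)).1 h1
  by_contra hne
  have h3 : 3 ≤ k := by
    by_contra h; apply hne; rw [show k = 2 by omega]
  apply h27
  have h4 : Nat.card P ∣ Fintype.card G := by
    rw [← Nat.card_eq_fintype_card]; exact Subgroup.card_subgroup_dvd_card _
  rw [hk'] at h4
  exact (pow_dvd_pow 3 h3).trans h4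

theorem caseC_real_aux (h27 : ¬ 27 ∣ Fintype.card G) (P : Subgroup G) (hP : Nat.card P = 9)
    (hcomm : ∀ a b : P, a * b = b * a)
    (hb : ¬ Subgroup.normalizer (P : Set G) ≤ Subgroup.centralizer (P : Set G)) :
    ∃ g : G, orderOf g = 3 ∧ (∃ x, x⁻¹ * g * x = g⁻¹) ∧ 9 ∣ Nat.card (cen g) := by
  let φ := Subgroup.normalizerMonoidHom (P : Subgroup G)
  have hker : φ.ker = (Subgroup.centralizer (P : Set G)).subgroupOf (Subgroup.normalizer (P : Set G)) :=
    Subgroup.normalizerMonoidHom_ker _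
  have hPC : (P : Subgroup G) ≤ Subgroup.centralizer (P : Set G) := by
    intro a ha
    rw [Subgroup.mem_centralizer_iff]
    intro b hb
    have := hcomm ⟨b, hb⟩ ⟨a, ha⟩
    simpa [Subtype.ext_iff] using this
  have hk9 : 9 ∣ Nat.card φ.ker := by
    have h1 : (P : Subgroup G).subgroupOf (Subgroup.normalizer (P : Set G)) ≤ φ.ker := by
      rw [hker]; intro a ha; exact hPC ha
    have h2 := Subgroup.card_dvd_of_le h1
    rw [Nat.card_congr (Subgroup.subgroupOfEquivOfLe (Subgroup.le_normalizer (H := (P : Subgroup G)))).toEquiv] at h2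
    rwa [hP] at h2
  have hr3 : ¬ 3 ∣ Nat.card φ.range := by
    intro h
    have h1 := Subgroup.card_mul_index φ.ker
    rw [Subgroup.index_ker] at h1
    have h2 : 27 ∣ Nat.card (Subgroup.normalizer (P : Set G)) := by
      rw [← h1]; exact mul_dvd_mul hk9 h
    apply h27
    rw [← Nat.card_eq_fintype_card]
    exact h2.trans (Subgroup.card_subgroup_dvd_card _)
  obtain ⟨x, hx⟩ : ∃ x, φ x ≠ 1 := by
    by_contra! hh
    apply hb
    intro x hx
    have : (⟨x, hx⟩ : Subgroup.normalizer (P : Set G)) ∈ φ.ker := hh _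
    rw [hker] at this
    exact this
  have hk1 : orderOf (φ x) ≠ 1 := by rwa [Ne, orderOf_eq_one_iff]
  have hk0 : 0 < orderOf (φ x) := orderOf_pos _
  obtain ⟨p, hp, hpd⟩ := Nat.exists_prime_and_dvd hk1
  have := Fact.mk hp
  set y := x ^ (orderOf (φ x) / p) with hy
  have hyo : orderOf (φ y) = p := by
    rw [hy, map_pow]; exact orderOf_pow_orderOf_div hk0.ne' hpd
  have hp3 : p ≠ 3 := by
    rintro rfl
    apply hr3
    have := orderOf_dvd_natCard (⟨φ y, y, rfl⟩ : φ.range)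
    rw [← Subgroup.orderOf_coe] at this
    exact hyo.symm.dvd.trans this
  let F : Subgroup P :=
    { carrier := {q | φ y q = q}
      one_mem' := map_one _
      mul_mem' := by
        intro a b ha hb
        simp only [Set.mem_ofPred_eq] at *
        rw [map_mul, ha, hb]
      inv_mem' := by
        intro a ha
        simp only [Set.mem_ofPred_eq] at *
        rw [map_inv, ha] }
  have hF9 : Nat.card F ∣ 9 := by
    have := Subgroup.card_subgroup_dvd_card F
    rwa [hP] at this
  have hFne : Nat.card F ≠ 9 := by
    intro h
    have hFt : F = ⊤ := Subgroup.eq_top_of_card_eq F (by rw [h, hP])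
    have h1 : φ y = 1 := by
      ext1 q
      have : q ∈ F := by rw [hFt]; trivial
      exact this
    rw [h1, orderOf_one] at hyo
    exact hp.one_lt.ne hyo
  let f : Function.End P := fun q => φ y q
  have hfpow : ∀ k : ℕ, f ^ k = fun q => (φ y ^ k) q := by
    intro k
    induction k with
    | zero => rfl
    | succ k ih => rw [pow_succ, ih, pow_succ]; rfl
  have hfp : f ^ p ^ 1 = 1 := by
    rw [pow_one, hfpow, ← hyo, pow_orderOf_eq_one]; rfl
  have hmod := Equiv.Perm.card_fixedPoints_modEq hfp
  have e1 : Fintype.card P = 9 := by rw [← Nat.card_eq_fintype_card]; exact hP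
  have e2 : Fintype.card f.fixedPoints = Nat.card F := by
    rw [← Nat.card_eq_fintype_card]; rfl
  rw [e1, e2] at hmod
  have hp2 : p = 2 := by
    have hle := Nat.le_of_dvd (by norm_num) hF9
    have h2 := (Nat.modEq_iff_dvd' hle).1 hmod.symm
    generalize Nat.card F = c at *
    have hc : c = 1 ∨ c = 3 := by
      have : c ∈ Nat.divisors 9 := Nat.mem_divisors.2 ⟨hF9, by norm_num⟩
      have h9 : Nat.divisors 9 = {1, 3, 9} := by decide
      rw [h9] at this
      simp at this
      omega
    rcases hc with rfl | rfl
    · have : p ∣ 2 ^ 3 := h2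
      exact (Nat.prime_dvd_prime_iff_eq hp Nat.prime_two).1 (hp.dvd_of_dvd_pow this)
    · have : p ∣ 2 * 3 := h2
      rcases (Nat.Prime.dvd_mul hp).1 this with h | h
      · exact (Nat.prime_dvd_prime_iff_eq hp Nat.prime_two).1 h
      · exact absurd ((Nat.prime_dvd_prime_iff_eq hp Nat.prime_three).1 h) hp3
  obtain ⟨q, hq⟩ : ∃ q, φ y q ≠ q := by
    by_contra! hh
    apply hFne
    have : F = ⊤ := by
      ext q; simp only [Subgroup.mem_top, iff_true]; exact hh q
    rw [this, Subgroup.card_top]; exact hP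
  have hsq : ∀ q, φ y (φ y q) = q := by
    intro q
    have : φ y ^ 2 = 1 := by rw [← hp2, ← hyo, pow_orderOf_eq_one]
    rw [pow_two] at this
    have := congrArg (fun z => z q) this
    exact this
  have hh1 : φ y (q⁻¹ * φ y q) = (q⁻¹ * φ y q)⁻¹ := by
    rw [map_mul, map_inv, hsq, mul_inv_rev, inv_inv]
  have hh2 : q⁻¹ * φ y q ≠ 1 := by
    intro h
    exact hq (inv_mul_eq_one.1 h).symm
  generalize q⁻¹ * φ y q = u at *
  have hu9 : u ^ 9 = 1 := by
    have : u ^ Nat.card P = 1 := pow_card_eq_one'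
    rwa [hP] at this
  obtain ⟨v, hv3, hv1, hvi⟩ : ∃ v : P, v ^ 3 = 1 ∧ v ≠ 1 ∧ φ y v = v⁻¹ := by
    by_cases h3 : u ^ 3 = 1
    · exact ⟨u, h3, hh2, hh1⟩
    · refine ⟨u ^ 3, ?_, h3, ?_⟩
      · rw [← pow_mul]; exact hu9
      · rw [map_pow, hh1, inv_pow]
  refine ⟨(v : G), ?_, ?_, ?_⟩
  · apply cube_dvd
    · have := congrArg (Subtype.val) hv3
      simpa using this
    · simpa using hv1
  · refine ⟨(y : G)⁻¹, ?_⟩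
    have := congrArg (Subtype.val) hvi
    rw [inv_inv]
    exact this
  · have h1 : (P : Subgroup G) ≤ cen (v : G) := by
      intro a ha
      rw [mem_cen]
      have := hcomm ⟨a, ha⟩ v
      simpa [Subtype.ext_iff] using this
    have h2 := Subgroup.card_dvd_of_le h1
    rwa [hP] at h2

theorem caseC_real [IsSimpleGroup G] (hna : ¬ ∀ a b : G, a * b = b * a) (h9 : 9 ∣ Fintype.card G)
    (h27 : ¬ 27 ∣ Fintype.card G) :
    ∃ g : G, orderOf g = 3 ∧ (∃ x, x⁻¹ * g * x = g⁻¹) ∧ 9 ∣ Nat.card (cen g) := by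
  have : Fact (Nat.Prime 3) := ⟨Nat.prime_three⟩
  obtain ⟨P⟩ : Nonempty (Sylow 3 G) := inferInstance
  have hP := card_sylow9 h9 h27 P
  have hcomm := (IsPGroup.isMulCommutative_of_card_eq_prime_sq hP).is_comm.comm
  have hPb : (P : Subgroup G) ≠ ⊥ := P.ne_bot_of_dvd_card (by
    rw [Nat.card_eq_fintype_card]; exact (by norm_num : 3 ∣ 9).trans h9)
  exact caseC_real_aux h27 P hP hcomm (burnside hna 3 P hPb)

theorem sC_comm (h9 : 9 ∣ Fintype.card G) (h27 : ¬ 27 ∣ Fintype.card G) {g x : G} (hg : orderOf g = 3)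
    (hx : x ∈ sC g) : x ∈ cen g := by
  have : Fact (Nat.Prime 3) := ⟨Nat.prime_three⟩
  have hg3 : g ^ 3 = 1 := by rw [← hg]; exact pow_orderOf_eq_one g
  obtain ⟨f1, f2⟩ := sC_facts hx
  have hx3 : x ^ 3 = 1 := by simp only [sC, mem_filter, mem_univ, true_and] at hx; exact hx.1
  have hy3 : (x⁻¹ * g * x) ^ 3 = 1 := by
    have := cube_conj x⁻¹ hg3
    rwa [inv_inv] at this
  obtain ⟨y, hy⟩ : ∃ y, y = x⁻¹ * g * x := ⟨_, rfl⟩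
  rw [← hy] at f1 f2 hy3
  obtain ⟨z, hz⟩ : ∃ z, z = g⁻¹ * y := ⟨_, rfl⟩
  have cgy : Commute g y := f1.symm
  have cgz : Commute g z := by rw [hz]; exact (Commute.refl g).inv_right.mul_right cgy
  have hz3 : z ^ 3 = 1 := by
    rw [hz, cgy.inv_left.mul_pow, hy3, cube_inv hg3, mul_one]
  have hgg : g⁻¹ * g⁻¹ = g := by
    have hgg : g * g = g⁻¹ := eq_inv_of_mul_eq_one_left (by rw [← pow_two, ← pow_succ]; exact hg3)
    rw [← mul_inv_rev, hgg, inv_inv]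
  have hyy : y⁻¹ * y⁻¹ = y := by
    have hgg : y * y = y⁻¹ := eq_inv_of_mul_eq_one_left (by rw [← pow_two, ← pow_succ]; exact hy3)
    rw [← mul_inv_rev, hgg, inv_inv]
  have hxz : x⁻¹ * z * x = z := by
    have e1 : x⁻¹ * z * x = (x⁻¹ * g * x)⁻¹ * (x⁻¹ * y * x) := by rw [hz]; group
    rw [e1, ← hy, f2, hz, mul_inv_rev]
    calc y⁻¹ * (g⁻¹ * y⁻¹) = y⁻¹ * (y⁻¹ * g⁻¹) := by rw [cgy.inv_inv.eq]
      _ = (y⁻¹ * y⁻¹) * g⁻¹ := by group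
      _ = y * g⁻¹ := by rw [hyy]
      _ = _ := cgy.inv_left.eq.symm
  have cxz : Commute x z := by
    have : x * (x⁻¹ * z * x) = z * x := by group
    rw [hxz] at this
    exact this
  have pz : ∀ w : G, w ^ 3 = 1 → IsPGroup 3 (Subgroup.zpowers w) := by
    intro w hw
    apply IsPGroup.of_card_dvd_pow (n := 1)
    rw [Nat.card_zpowers, pow_one]
    exact orderOf_dvd_of_pow_eq_one hw
  have normC : ∀ (w : G) (K : Subgroup G), (∀ k ∈ K, w * k * w⁻¹ ∈ K) →
      w ∈ Subgroup.normalizer (K : Set G) := by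
    intro w K h
    exact Subgroup.mem_normalizer_fintype h
  have hgz : IsPGroup 3 (Subgroup.zpowers g ⊔ Subgroup.zpowers z : Subgroup G) := by
    apply IsPGroup.to_sup_of_normal_right' (pz g hg3) (pz z hz3)
    rw [Subgroup.zpowers_le]
    apply normC
    intro k hk
    obtain ⟨i, rfl⟩ := Subgroup.mem_zpowers_iff.1 hk
    rw [(cgz.zpow_right i).eq, mul_inv_cancel_right]; exact hk
  have hgm : g ∈ (Subgroup.zpowers g ⊔ Subgroup.zpowers z : Subgroup G) :=
    Subgroup.mem_sup_left (Subgroup.mem_zpowers g)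
  have hzm : z ∈ (Subgroup.zpowers g ⊔ Subgroup.zpowers z : Subgroup G) :=
    Subgroup.mem_sup_right (Subgroup.mem_zpowers z)
  have hN : x⁻¹ ∈ Subgroup.normalizer ((Subgroup.zpowers g ⊔ Subgroup.zpowers z : Subgroup G) : Set G) := by
    apply normC
    have hle : (Subgroup.zpowers g ⊔ Subgroup.zpowers z : Subgroup G) ≤
        (Subgroup.zpowers g ⊔ Subgroup.zpowers z : Subgroup G).comap (MulAut.conj x⁻¹).toMonoidHom := by
      rw [sup_le_iff, Subgroup.zpowers_le, Subgroup.zpowers_le]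
      constructor
      · show x⁻¹ * g * x⁻¹⁻¹ ∈ (Subgroup.zpowers g ⊔ Subgroup.zpowers z : Subgroup G)
        rw [inv_inv, ← hy]
        have : y = g * z := by rw [hz]; group
        rw [this]; exact mul_mem hgm hzm
      · show x⁻¹ * z * x⁻¹⁻¹ ∈ (Subgroup.zpowers g ⊔ Subgroup.zpowers z : Subgroup G)
        rw [inv_inv, hxz]; exact hzm
    intro k hk
    exact hle hk
  have hall : IsPGroup 3 (Subgroup.zpowers x ⊔ (Subgroup.zpowers g ⊔ Subgroup.zpowers z) : Subgroup G) := by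
    apply IsPGroup.to_sup_of_normal_right' (pz x hx3) hgz
    rw [Subgroup.zpowers_le]
    have := inv_mem hN
    rwa [inv_inv] at this
  obtain ⟨Q, hQ⟩ := hall.exists_le_sylow
  have hcomm := (IsPGroup.isMulCommutative_of_card_eq_prime_sq (card_sylow9 h9 h27 Q)).is_comm.comm
  have := hcomm ⟨x, hQ (Subgroup.mem_sup_left (Subgroup.mem_zpowers x))⟩ ⟨g, hQ (Subgroup.mem_sup_right hgm)⟩
  rw [mem_cen]
  simpa [Subtype.ext_iff] using this

theorem six_le_of_nine_dvd {b : ℕ} (h : 9 ∣ b.factorial) : 6 ≤ b := by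
  by_contra hb
  have : b ≤ 5 := by omega
  interval_cases b <;> revert h <;> decide

theorem caseC [IsSimpleGroup G] (hna : ¬ ∀ a b : G, a * b = b * a) (h9 : 9 ∣ Fintype.card G)
    (h27 : ¬ 27 ∣ Fintype.card G) : 311 * Fintype.card G < 100 * ∑ x : G, orderOf x := by
  by_contra hcon
  obtain ⟨g, hg, hr, hc9⟩ := caseC_real hna h9 h27
  have h1 := coset_main hg hcon
  have h2 := sA_le g
  have h3 := sB_le_real hg hr
  have h4 : (sC g).card ≤ Nat.card (cen g) := by
    rw [← card_sub]
    apply Finset.card_le_card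
    intro x hx
    simp only [mem_filter, mem_univ, true_and]
    exact sC_comm h9 h27 hg hx
  have h5 := card_cls g
  obtain ⟨b, r, hbr, hr2, hbf⟩ := real_index hna hg hr
  have hb6 := six_le_of_nine_dvd (h9.trans hbf)
  obtain ⟨k, hk⟩ := hc9
  have hk0 : 0 < k := by
    have : 0 < Nat.card (cen g) := Nat.card_pos
    omega
  have hm12 : 12 ≤ (cls g).card := by rw [hbr]; nlinarith
  have h6 : 67 * Fintype.card G ≤ 500 * Nat.card (cen g) + 300 * (cls g).card := by omega
  generalize (cls g).card = m at *
  rw [hk] at h5 h6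
  rw [← h5] at h6 h27
  have hk1 : k = 1 := by nlinarith
  subst hk1
  have hm3 : ¬ 3 ∣ m := by
    rintro ⟨j, rfl⟩
    apply h27
    exact ⟨j, by ring⟩
  have hm14 : m ≤ 14 := by omega
  have hm : m = 13 ∨ m = 14 := by
    have : m ≠ 12 := by rintro rfl; exact hm3 (by norm_num)
    omega
  rcases hm with rfl | rfl
  · have h13 : Nat.Prime 13 := by norm_num
    have := (Nat.dvd_prime h13).1 ⟨r, hbr⟩
    rcases this with rfl | rfl
    · omega
    · omega
  · have hn : Fintype.card G = 126 := by omega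
    have : Fact (Nat.Prime 7) := ⟨by norm_num⟩
    have h8 := card_sylow_ge hna 7 (by rw [hn]; norm_num)
    obtain ⟨P⟩ : Nonempty (Sylow 7 G) := inferInstance
    have hmod := card_sylow_modEq_one 7 G
    have hd : Nat.card (Sylow 7 G) ∣ 18 := by
      have e1 := P.card_dvd_index
      have e2 := Subgroup.card_mul_index (P : Subgroup G)
      have e3 : 7 ∣ Nat.card (P : Subgroup G) := by
        have := P.pow_dvd_card_of_pow_dvd_card (n := 1) (by
          rw [Nat.card_eq_fintype_card, hn]; norm_num)
        simpa using this
      obtain ⟨j, hj⟩ := e3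
      rw [hj, Nat.card_eq_fintype_card, hn] at e2
      refine e1.trans ⟨j, ?_⟩
      have : 7 * (j * (P : Subgroup G).index) = 7 * 18 := by rw [← mul_assoc, e2]
      rw [mul_comm]
      omega
    have hle := Nat.le_of_dvd (by norm_num) hd
    generalize Nat.card (Sylow 7 G) = s at *
    unfold Nat.ModEq at hmod
    have : s = 8 ∨ s = 15 := by omega
    rcases this with rfl | rfl
    · revert hd; decide
    · revert hd; decide
end caseC


open Finset
set_option linter.unusedSectionVars false
section caseD
open scoped Classical
variable {G : Type*} [Group G] [Fintype G]

theorem mem_of_odd (A B : Subgroup G) (h : Nat.card A < 3 * Nat.card (A ⊓ B : Subgroup G)) {x : G}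
    (hx : x ∈ A) (ho : Odd (orderOf x)) : x ∈ B := by
  have h1 : Nat.card (B.subgroupOf A) * (B.subgroupOf A).index = Nat.card A :=
    Subgroup.card_mul_index _
  have h2 : Nat.card (B.subgroupOf A) = Nat.card (A ⊓ B : Subgroup G) := by
    rw [← Subgroup.inf_subgroupOf_left]
    exact Nat.card_congr (Subgroup.subgroupOfEquivOfLe inf_le_left).toEquiv
  have h3 : (B.subgroupOf A).index < 3 := by
    rw [← h2, ← h1] at h
    by_contra hh
    have : Nat.card (B.subgroupOf A) * 3 ≤ Nat.card (B.subgroupOf A) * (B.subgroupOf A).index :=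
      Nat.mul_le_mul_left _ (by omega)
    omega
  have h0 : (B.subgroupOf A).index ≠ 0 := Subgroup.index_ne_zero_of_finite
  have hsq : x * x ∈ B := by
    have h12 : (B.subgroupOf A).index = 1 ∨ (B.subgroupOf A).index = 2 := by omega
    rcases h12 with h | h
    · have := Subgroup.index_eq_one.1 h
      have hh : (⟨x, hx⟩ : A) ∈ B.subgroupOf A := by rw [this]; trivial
      exact mul_mem hh hh
    · have := Subgroup.mul_self_mem_of_index_two h ⟨x, hx⟩
      exact this
  obtain ⟨j, hj⟩ := ho
  have e : x = (x * x) ^ (j + 1) := by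
    have : (x * x) ^ (j + 1) = x ^ (2 * j + 1) * x := by
      rw [← pow_two, ← pow_mul, ← pow_succ]; congr 1
    rw [this, ← hj, pow_orderOf_eq_one, one_mul]
  rw [e]
  exact pow_mem hsq _

noncomputable def oddS (g : G) : Set G := {x | x ∈ cen g ∧ Odd (orderOf x)}

theorem cen_conj {g x a : G} : a ∈ cen (x⁻¹ * g * x) ↔ x * a * x⁻¹ ∈ cen g := by
  rw [mem_cen, mem_cen]
  constructor
  · intro h
    calc x * a * x⁻¹ * g = x * (a * (x⁻¹ * g * x)) * x⁻¹ := by group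
      _ = x * (x⁻¹ * g * x * a) * x⁻¹ := by rw [h]
      _ = _ := by group
  · intro h
    calc a * (x⁻¹ * g * x) = x⁻¹ * (x * a * x⁻¹ * g) * x := by group
      _ = x⁻¹ * (g * (x * a * x⁻¹)) * x := by rw [h]
      _ = _ := by group

theorem orderOf_conj' (x a : G) : orderOf (x * a * x⁻¹) = orderOf a := by
  have := orderOf_injective (MulAut.conj x).toMonoidHom (MulAut.conj x).injective a
  simpa using this

theorem card_cen_conj (g x : G) : Nat.card (cen (x⁻¹ * g * x)) = Nat.card (cen g) := by
  rw [← card_sub, ← card_sub]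
  apply Finset.card_bij (fun a _ => x * a * x⁻¹)
  · intro a ha
    simp only [mem_filter, mem_univ, true_and] at ha ⊢
    exact cen_conj.1 ha
  · intro a _ b _ hab
    simpa using hab
  · intro a ha
    simp only [mem_filter, mem_univ, true_and] at ha
    refine ⟨x⁻¹ * a * x, ?_, by group⟩
    simp only [mem_filter, mem_univ, true_and]
    rw [cen_conj]
    have : x * (x⁻¹ * a * x) * x⁻¹ = a := by group
    rwa [this]

theorem mem_norm_odd {g x : G} (h : Nat.card (cen g) < 3 * Nat.card (cen g ⊓ cen (x⁻¹ * g * x) : Subgroup G)) :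
    x ∈ Subgroup.normalizer (Subgroup.closure (oddS g) : Set G) := by
  apply Subgroup.mem_normalizer_fintype
  have hle : Subgroup.closure (oddS g) ≤
      (Subgroup.closure (oddS g)).comap (MulAut.conj x).toMonoidHom := by
    rw [Subgroup.closure_le]
    intro a ha
    show x * a * x⁻¹ ∈ Subgroup.closure (oddS g)
    apply Subgroup.subset_closure
    refine ⟨?_, ?_⟩
    · rw [← cen_conj]
      exact mem_of_odd _ _ h ha.1 ha.2
    · rw [orderOf_conj']; exact ha.2
  intro n hn
  exact hle hn

theorem nine_le_of_dvd {b : ℕ} (h : 27 ∣ b.factorial) : 9 ≤ b := by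
  by_contra hb
  have : b ≤ 8 := by omega
  interval_cases b <;> revert h <;> decide

theorem sum_inter_bound [IsSimpleGroup G] (hna : ¬ ∀ a b : G, a * b = b * a) (h27 : 27 ∣ Fintype.card G)
    {g : G} (hg : orderOf g = 3) :
    27 * ∑ y ∈ cls g, Nat.card (cen g ⊓ cen y : Subgroup G) ≤ 11 * Fintype.card G := by
  set Nn := Subgroup.normalizer (Subgroup.closure (oddS g) : Set G) with hNn
  have hNt : Nn ≠ ⊤ := by
    intro h
    have hn : (Subgroup.closure (oddS g)).Normal := Subgroup.normalizer_eq_top_iff.1 h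
    have hgm : g ∈ Subgroup.closure (oddS g) := by
      apply Subgroup.subset_closure
      refine ⟨mem_cen.2 rfl, ?_⟩
      rw [hg]; decide
    rcases hn.eq_bot_or_eq_top with h1 | h1
    · rw [h1] at hgm
      exact g_ne_one hg (by simpa using hgm)
    · have hle : Subgroup.closure (oddS g) ≤ cen g := by
        rw [Subgroup.closure_le]; intro a ha; exact ha.1
      rw [h1] at hle
      exact g_ne_one hg (eq_one_of_central hna g (fun x => mem_cen.1 (hle (Subgroup.mem_top x))))
  have hb := nine_le_of_dvd (h27.trans (index_fact Nn hNt))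
  have hci := Subgroup.card_mul_index Nn
  rw [Nat.card_eq_fintype_card (α := G)] at hci
  have hN9 : 9 * Nat.card Nn ≤ Fintype.card G := by rw [← hci]; nlinarith
  obtain ⟨good, hgood⟩ : ∃ good : G → Prop, ∀ y, good y ↔
      Nat.card (cen g) < 3 * Nat.card (cen g ⊓ cen y : Subgroup G) := ⟨_, fun _ => Iff.rfl⟩
  have hs := sum_cls g (fun y => if good y then 1 else 0)
  rw [← Finset.card_filter, ← Finset.card_filter] at hs
  have hY : (univ.filter (fun x => good (x⁻¹ * g * x))).card ≤ Nat.card Nn := by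
    rw [← card_sub]
    apply Finset.card_le_card
    intro x hx
    simp only [mem_filter, mem_univ, true_and] at hx ⊢
    exact mem_norm_odd ((hgood _).1 hx)
  rw [hs] at hY
  have hterm : ∀ y ∈ cls g, 3 * Nat.card (cen g ⊓ cen y : Subgroup G) ≤
      Nat.card (cen g) + (if good y then 1 else 0) * (2 * Nat.card (cen g)) := by
    intro y _
    split_ifs with hgd
    · have : Nat.card (cen g ⊓ cen y : Subgroup G) ≤ Nat.card (cen g) :=
        Nat.le_of_dvd Nat.card_pos (Subgroup.card_dvd_of_le inf_le_left)
      omega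
    · have : ¬ (Nat.card (cen g) < 3 * Nat.card (cen g ⊓ cen y : Subgroup G)) := fun h => hgd ((hgood _).2 h)
      omega
  have hsum := Finset.sum_le_sum hterm
  rw [← Finset.mul_sum, Finset.sum_add_distrib, ← Finset.sum_mul, ← Finset.card_filter,
    Finset.sum_const, smul_eq_mul, mul_comm _ (Nat.card (cen g)), card_cls] at hsum
  nlinarith

theorem caseD [IsSimpleGroup G] (hna : ¬ ∀ a b : G, a * b = b * a) (h27 : 27 ∣ Fintype.card G) :
    311 * Fintype.card G < 100 * ∑ x : G, orderOf x := by
  by_contra hcon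
  have : Fact (Nat.Prime 3) := ⟨Nat.prime_three⟩
  obtain ⟨Q⟩ : Nonempty (Sylow 3 G) := inferInstance
  have hQ27 : 27 ∣ Nat.card (Q : Subgroup G) := by
    have := Q.pow_dvd_card_of_pow_dvd_card (n := 3) (by
      rw [Nat.card_eq_fintype_card]; exact h27)
    exact this
  have hQnt : Nontrivial (Q : Subgroup G) := by
    rw [← Finite.one_lt_card_iff_nontrivial]
    have := Nat.le_of_dvd Nat.card_pos hQ27
    omega
  have hQp : IsPGroup 3 (Q : Subgroup G) := Q.2
  have hZ := hQp.center_nontrivial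
  have hZp : IsPGroup 3 (Subgroup.center (Q : Subgroup G)) := hQp.to_subgroup _
  have hdvd : 3 ∣ Nat.card (Subgroup.center (Q : Subgroup G)) := by
    obtain ⟨k, hk⟩ := IsPGroup.iff_card.1 hZp
    have h1 := Finite.one_lt_card_iff_nontrivial.2 hZ
    rw [hk] at h1 ⊢
    exact dvd_pow_self 3 (by rintro rfl; simp at h1)
  obtain ⟨z, hz⟩ := exists_prime_orderOf_dvd_card' 3 hdvd
  obtain ⟨g, hgdef⟩ : ∃ g : G, g = ((z : (Q : Subgroup G)) : G) := ⟨_, rfl⟩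
  have hg : orderOf g = 3 := by
    rw [hgdef, Subgroup.orderOf_coe, Subgroup.orderOf_coe]; exact hz
  have hQC : (Q : Subgroup G) ≤ cen g := by
    intro a ha
    rw [mem_cen, hgdef]
    have := Subgroup.mem_center_iff.1 z.2 ⟨a, ha⟩
    have := congrArg Subtype.val this
    exact this
  have hC27 := hQ27.trans (Subgroup.card_dvd_of_le hQC)
  have hC27' := Nat.le_of_dvd Nat.card_pos hC27
  have hm3 : ¬ 3 ∣ (cls g).card := by
    rw [← index_cen]
    intro h
    exact Q.not_dvd_index (h.trans (Subgroup.index_dvd_of_le hQC))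
  have h1 := coset_main hg hcon
  have hcl := card_cls g
  have hS := sum_inter_bound hna h27 hg
  have hmpos : 0 < (cls g).card := by
    rw [Finset.card_pos]; exact ⟨g, mem_cls.2 ⟨1, by simp⟩⟩
  have hn27 : 27 * (cls g).card ≤ Fintype.card G := by rw [← hcl]; exact Nat.mul_le_mul_right _ hC27'
  by_cases hr : ∃ x, x⁻¹ * g * x = g⁻¹
  · have h2 := sA_le g
    have h3 := sB_le_real hg hr
    have h4 := sC_le_real hg hr
    obtain ⟨b, r, hbr, hr2, hbf⟩ := real_index hna hg hr
    have hb9 := nine_le_of_dvd (h27.trans hbf)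
    have hm18 : 18 ≤ (cls g).card := by rw [hbr]; nlinarith
    have h5 : 409 * Fintype.card G ≤ 8100 * Nat.card (cen g) := by omega
    rw [← hcl] at h5
    have hCpos : 0 < Nat.card (cen g) := Nat.card_pos
    have hm19 : (cls g).card ≤ 19 := by nlinarith
    have hm : (cls g).card = 19 := by
      have : (cls g).card ≠ 18 := by intro h; rw [h] at hm3; exact hm3 (by norm_num)
      omega
    rw [hm] at hbr
    have h19 : Nat.Prime 19 := by norm_num
    rcases (Nat.dvd_prime h19).1 ⟨r, hbr⟩ with rfl | rfl
    · omega
    · omega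
  · push Not at hr
    have h2 := sA_empty hr
    have h3 := sB_le g
    have h4 := sC_le g
    omega

theorem simple_case [IsSimpleGroup G] (hna : ¬ ∀ a b : G, a * b = b * a) :
    311 * Fintype.card G < 100 * ∑ x : G, orderOf x := by
  by_cases h3 : 3 ∣ Fintype.card G
  · by_cases h9 : 9 ∣ Fintype.card G
    · by_cases h27 : 27 ∣ Fintype.card G
      · exact caseD hna h27
      · exact caseC hna h9 h27
    · exact caseB hna h3 h9
  · exact caseA hna h3
end caseD


open Finset
set_option linter.unusedSectionVars false
section perfect

theorem perm4_a : ∀ a b : Equiv.Perm (Fin 4), Equiv.Perm.sign a = 1 → Equiv.Perm.sign b = 1 →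
    (a * b * a⁻¹ * b⁻¹) ^ 2 = 1 := by decide +kernel
theorem perm4_b : ∀ a b : Equiv.Perm (Fin 4), a ^ 2 = 1 → b ^ 2 = 1 → Equiv.Perm.sign a = 1 →
    Equiv.Perm.sign b = 1 → a * b = b * a := by decide +kernel

theorem perfect_hom_trivial {H : Type*} [Group H] (hperf : commutator H = ⊤)
    (φ : H →* Equiv.Perm (Fin 4)) (s : H) : φ s = 1 := by
  have hle : ∀ K : Subgroup H, (∀ a b : H, a * b * a⁻¹ * b⁻¹ ∈ K) → ∀ s, s ∈ K := by
    intro K hK s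
    have h1 : commutator H ≤ K := by
      rw [commutator_def, Subgroup.commutator_le]
      intro a _ b _
      exact hK a b
    rw [hperf] at h1
    exact h1 (Subgroup.mem_top s)
  have hsign : ∀ s, Equiv.Perm.sign (φ s) = 1 := by
    intro s
    have := hle ((Equiv.Perm.sign.comp φ).ker) (by
      intro a b
      rw [MonoidHom.mem_ker]
      simp only [map_mul, map_inv]
      rw [mul_comm ((Equiv.Perm.sign.comp φ) a) ((Equiv.Perm.sign.comp φ) b), mul_inv_cancel_right,
        mul_inv_cancel]) s
    exact this
  let V : Subgroup (Equiv.Perm (Fin 4)) :=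
    { carrier := {c | c ^ 2 = 1 ∧ Equiv.Perm.sign c = 1}
      one_mem' := by simp
      mul_mem' := by
        rintro a b ⟨ha1, ha2⟩ ⟨hb1, hb2⟩
        have : Commute a b := perm4_b a b ha1 hb1 ha2 hb2
        refine ⟨?_, by rw [map_mul, ha2, hb2, one_mul]⟩
        rw [this.mul_pow, ha1, hb1, one_mul]
      inv_mem' := by
        rintro a ⟨ha1, ha2⟩
        exact ⟨by rw [inv_pow, ha1, inv_one], by rw [map_inv, ha2, inv_one]⟩ }
  have hV : ∀ s, φ s ^ 2 = 1 := by
    intro s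
    have := hle (V.comap φ) (by
      intro a b
      refine ⟨?_, hsign _⟩
      simp only [map_mul, map_inv]
      exact perm4_a _ _ (hsign a) (hsign b)) s
    exact this.1
  have := hle φ.ker (by
    intro a b
    rw [MonoidHom.mem_ker]
    simp only [map_mul, map_inv]
    rw [perm4_b (φ a) (φ b) (hV a) (hV b) (hsign a) (hsign b)]
    group) s
  exact this

theorem card_sylow_ne_four {H : Type*} [Group H] [Fintype H] (hperf : commutator H = ⊤)
    [Fact (Nat.Prime 3)] : Nat.card (Sylow 3 H) ≠ 4 := by
  intro h4
  let e : Sylow 3 H ≃ Fin 4 := Finite.equivFinOfCardEq h4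
  let φ : H →* Equiv.Perm (Fin 4) :=
    (e.permCongrHom.toMonoidHom).comp (MulAction.toPermHom H (Sylow 3 H))
  have hφ := perfect_hom_trivial hperf φ
  have hfix : ∀ (s : H) (P : Sylow 3 H), s • P = P := by
    intro s P
    have h1 := congrArg (fun f => f (e P)) (hφ s)
    have h2 : e (s • P) = e P := by simpa [φ] using h1
    exact e.injective h2
  have hsub : Subsingleton (Sylow 3 H) := by
    constructor
    intro P Q
    obtain ⟨s, hs⟩ := MulAction.exists_smul_eq H P Q
    rw [← hs, hfix]
  have := Finite.card_le_one_iff_subsingleton.2 hsub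
  omega
end perfect

section conjsolv
theorem solvable_of_conj_comm (n : ℕ) : ∀ (H : Type*) [Group H] [Finite H], Nat.card H ≤ n →
    (∀ h u : H, Commute h (u⁻¹ * h * u)) → Group.IsSolvable H := by
  induction n with
  | zero =>
    intro H _ _ hn
    have : 0 < Nat.card H := Nat.card_pos
    omega
  | succ n ih =>
    intro H _ _ hn hc
    by_cases hs : ∀ h : H, h = 1
    · have : Subsingleton H := ⟨fun a b => by rw [hs a, hs b]⟩
      infer_instance
    · push Not at hs
      obtain ⟨h, hh⟩ := hs
      have hN : IsMulCommutative (Subgroup.normalClosure {h}) := by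
        apply Subgroup.isMulCommutative_closure
        have hcj : ∀ x ∈ Group.conjugatesOfSet {h}, ∃ u, x = u⁻¹ * h * u := by
          intro x hx
          rw [Group.mem_conjugatesOfSet_iff] at hx
          obtain ⟨a, ha, hax⟩ := hx
          rw [Set.mem_singleton_iff] at ha
          subst ha
          obtain ⟨c, hc⟩ := isConj_iff.1 hax
          exact ⟨c⁻¹, by rw [inv_inv]; exact hc.symm⟩
        intro x hx y hy
        obtain ⟨u, rfl⟩ := hcj x hx
        obtain ⟨v, rfl⟩ := hcj y hy
        have h1 := hc (u⁻¹ * h * u) (u⁻¹ * v)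
        have e : (u⁻¹ * v)⁻¹ * (u⁻¹ * h * u) * (u⁻¹ * v) = v⁻¹ * h * v := by group
        rw [e] at h1
        exact h1.eq
      rw [Group.isSolvable_iff_subgroup_quotient (Subgroup.normalClosure {h})]
      constructor
      · exact Group.isSolvable_of_comm hN.is_comm.comm
      · apply ih
        · have h1 := Subgroup.card_eq_card_quotient_mul_card_subgroup (Subgroup.normalClosure {h})
          have h2 : 1 < Nat.card (Subgroup.normalClosure {h}) := by
            rw [Finite.one_lt_card_iff_nontrivial, Subgroup.nontrivial_iff_ne_bot]
            intro hb
            have : h ∈ Subgroup.normalClosure {h} := Subgroup.subset_normalClosure rfl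
            rw [hb] at this
            exact hh (by simpa using this)
          have h3 : 0 < Nat.card (H ⧸ Subgroup.normalClosure {h}) := Nat.card_pos
          nlinarith
        · intro a b
          obtain ⟨a, rfl⟩ := QuotientGroup.mk_surjective a
          obtain ⟨b, rfl⟩ := QuotientGroup.mk_surjective b
          exact (hc a b).map (QuotientGroup.mk' _)
end conjsolv


open Finset
set_option linter.unusedSectionVars false
section cosetred
open scoped Classical
variable {G : Type*} [Group G] [Fintype G]

noncomputable def cntS (S : Subgroup G) (y : G) (k : ℕ) : ℕ :=
  (univ.filter (fun s : G => s ∈ S ∧ (y * s) ^ k = 1)).card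

theorem d3_union (S : Subgroup G) [S.Normal] (y : G) (h : 289 * Nat.card S ≤ 300 * cntS S y 3)
    (a b : Fin 9 → G) (ha : ∀ i, a i ∈ S) (hb : ∀ i, b i ∈ S) :
    ∃ w : G, ∀ i, (a i * w * b i) ^ 3 = 1 := by
  by_contra! hcon
  have hbad : ∀ i, (univ.filter (fun s : G => s ∈ S ∧ ¬ (a i * (y * s) * b i) ^ 3 = 1)).card =
      (univ.filter (fun s : G => s ∈ S ∧ ¬ (y * s) ^ 3 = 1)).card := by
    intro i
    have hn : y⁻¹ * a i * y ∈ S := by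
      have := (inferInstance : S.Normal).conj_mem _ (ha i) y⁻¹
      rwa [inv_inv] at this
    apply Finset.card_bij (fun s _ => (y⁻¹ * a i * y) * s * b i)
    · intro s hs
      simp only [mem_filter, mem_univ, true_and] at hs ⊢
      refine ⟨S.mul_mem (S.mul_mem hn hs.1) (hb i), ?_⟩
      have : y * (y⁻¹ * a i * y * s * b i) = a i * (y * s) * b i := by group
      rw [this]; exact hs.2
    · intro s _ t _ hst
      simpa using hst
    · intro s hs
      simp only [mem_filter, mem_univ, true_and] at hs
      refine ⟨(y⁻¹ * a i * y)⁻¹ * s * (b i)⁻¹, ?_, by group⟩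
      simp only [mem_filter, mem_univ, true_and]
      refine ⟨S.mul_mem (S.mul_mem (S.inv_mem hn) hs.1) (S.inv_mem (hb i)), ?_⟩
      have : a i * (y * ((y⁻¹ * a i * y)⁻¹ * s * (b i)⁻¹)) * b i = y * s := by group
      rw [this]; exact hs.2
  have hsub : (univ.filter (fun s : G => s ∈ S)) ⊆ univ.biUnion (fun i : Fin 9 =>
      (univ.filter (fun s : G => s ∈ S ∧ ¬ (a i * (y * s) * b i) ^ 3 = 1))) := by
    intro s hs
    simp only [mem_filter, mem_univ, true_and] at hs
    obtain ⟨i, hi⟩ := hcon (y * s)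
    simp only [mem_biUnion, mem_filter, mem_univ, true_and]
    exact ⟨i, hs, hi⟩
  have h1 := (Finset.card_le_card hsub).trans Finset.card_biUnion_le
  simp only [hbad, Finset.sum_const, Finset.card_univ, Fintype.card_fin, smul_eq_mul] at h1
  rw [card_sub] at h1
  have h2 : (univ.filter (fun s : G => s ∈ S ∧ (y * s) ^ 3 = 1)).card +
      (univ.filter (fun s : G => s ∈ S ∧ ¬ (y * s) ^ 3 = 1)).card = Nat.card S := by
    rw [← card_sub S, ← Finset.filter_filter, ← Finset.filter_filter]
    exact Finset.card_filter_add_card_filter_not _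
  have hpos : 0 < Nat.card S := Nat.card_pos
  unfold cntS at h
  omega

theorem d3_comm (S : Subgroup G) [S.Normal] (y : G) (hd : 289 * Nat.card S ≤ 300 * cntS S y 3)
    {h u : G} (hh : h ∈ S) (hu : u ∈ S) : Commute h (u⁻¹ * h * u) := by
  obtain ⟨k, hk⟩ : ∃ k, k = u⁻¹ * h * u := ⟨_, rfl⟩
  have hkS : k ∈ S := by rw [hk]; exact S.mul_mem (S.mul_mem (S.inv_mem hu) hh) hu
  rw [← hk]
  have hui := S.inv_mem hu
  obtain ⟨w, hw⟩ := d3_union S y hd ![1, 1, 1, u⁻¹, u⁻¹, u⁻¹, 1, 1, 1]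
    ![1, h, h⁻¹, 1, k, k⁻¹, u, u * k, u * k⁻¹]
    (by intro i; fin_cases i <;> first | exact S.one_mem | exact hui)
    (by intro i; fin_cases i <;> first
          | exact S.one_mem
          | exact hh
          | exact S.inv_mem hh
          | exact hkS
          | exact S.inv_mem hkS
          | exact hu
          | exact S.mul_mem hu hkS
          | exact S.mul_mem hu (S.inv_mem hkS))
  have w0 : (1 * w * 1) ^ 3 = 1 := hw 0
  have w1 : (1 * w * h) ^ 3 = 1 := hw 1
  have w2 : (1 * w * h⁻¹) ^ 3 = 1 := hw 2
  have w3 : (u⁻¹ * w * 1) ^ 3 = 1 := hw 3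
  have w4 : (u⁻¹ * w * k) ^ 3 = 1 := hw 4
  have w5 : (u⁻¹ * w * k⁻¹) ^ 3 = 1 := hw 5
  have w6 : (1 * w * u) ^ 3 = 1 := hw 6
  have w7 : (1 * w * (u * k)) ^ 3 = 1 := hw 7
  have w8 : (1 * w * (u * k⁻¹)) ^ 3 = 1 := hw 8
  simp only [one_mul, mul_one, ← mul_assoc] at w0 w1 w2 w3 w4 w5 w6 w7 w8
  have mem : ∀ x g : G, x ^ 3 = 1 → (x * g) ^ 3 = 1 → (x * g⁻¹) ^ 3 = 1 → x ∈ sC g := by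
    intro x g h1 h2 h3
    simp only [sC, mem_filter, mem_univ, true_and]
    exact ⟨h1, h2, h3⟩
  have rot : ∀ x g : G, x ^ 3 = 1 → x⁻¹ * (x⁻¹ * g * x) * x = x * g * x⁻¹ := by
    intro x g h0
    have hxx : x * x = x⁻¹ := eq_inv_of_mul_eq_one_left (by rw [← pow_two, ← pow_succ]; exact h0)
    have hxi : x⁻¹ * x⁻¹ = x := by rw [← mul_inv_rev, hxx, inv_inv]
    calc x⁻¹ * (x⁻¹ * g * x) * x = (x⁻¹ * x⁻¹) * g * (x * x) := by group
      _ = _ := by rw [hxi, hxx]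
  obtain ⟨p1, p2⟩ := sC_facts (mem w h w0 w1 w2)
  obtain ⟨q1, q2⟩ := sC_facts (mem _ k w3 w4 w5)
  obtain ⟨r1, r2⟩ := sC_facts (mem _ k w6 w7 w8)
  rw [rot _ _ w0] at p2
  rw [rot _ _ w6] at r2
  have e1 : (u⁻¹ * w)⁻¹ * k * (u⁻¹ * w) = w⁻¹ * h * w := by rw [hk]; group
  have e2 : w * u * k * (w * u)⁻¹ = w * h * w⁻¹ := by rw [hk]; group
  rw [e1] at q1
  rw [e2] at r2
  have c1 : Commute k (w⁻¹ * h * w) := q1.symm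
  have c2 : Commute k (w * h * w⁻¹) := by
    rw [r2]
    have : Commute k ((w * u)⁻¹ * k * (w * u)) := r1.symm
    exact (this.mul_right (Commute.refl k)).inv_right
  have e3 : h = (w⁻¹ * h * w)⁻¹ * (w * h * w⁻¹)⁻¹ := by rw [p2]; group
  have c3 : Commute k h := by
    rw [e3]; exact c1.inv_right.mul_right c2.inv_right
  exact c3.symm

theorem d3_solvable (S : Subgroup G) [S.Normal] (y : G) (hd : 289 * Nat.card S ≤ 300 * cntS S y 3) :
    Group.IsSolvable S := by
  apply solvable_of_conj_comm (Nat.card S) S le_rfl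
  intro h u
  have := d3_comm S y hd h.2 u.2
  have h2 : (h : G) * ((u : G)⁻¹ * h * u) = ((u : G)⁻¹ * h * u) * h := this
  exact Subtype.ext h2

theorem d2_sylow (S : Subgroup G) (y : G) (p : ℕ) [Fact p.Prime] :
    p * Nat.card (Sylow p S) * cntS S y 2 ≤ (p + Nat.card (Sylow p S)) * Nat.card S := by
  obtain ⟨P⟩ : Nonempty (Sylow p S) := inferInstance
  let R : Subgroup G := (P : Subgroup S).map S.subtype
  have hRS : R ≤ S := by
    rintro _ ⟨a, _, rfl⟩; exact a.2
  have hRp : IsPGroup p R := IsPGroup.map P.2 S.subtype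
  have h1 := lemmaS p S R hRS hRp y
  have h2 := lemmaS_norm S R y
  have h3 : Nat.card (S ⊓ Subgroup.normalizer (R : Set G) : Subgroup G) ≤
      Nat.card (Subgroup.normalizer ((P : Subgroup S) : Set S)) := by
    apply Nat.card_le_card_of_injective
      (fun s => ⟨⟨s.1, s.2.1⟩, by
        apply Subgroup.mem_normalizer_fintype
        intro n hn
        have h5 : (s : G) ∈ Subgroup.normalizer (R : Set G) := s.2.2
        rw [Subgroup.mem_normalizer_iff] at h5
        have h6 := (h5 (n : G)).1 ⟨n, hn, rfl⟩
        obtain ⟨z, hz, hz2⟩ := h6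
        have : z = ⟨s.1, s.2.1⟩ * n * (⟨s.1, s.2.1⟩ : S)⁻¹ := Subtype.ext hz2
        rw [← this]; exact hz⟩)
    intro a b hab
    simp only [Subtype.mk.injEq] at hab
    exact Subtype.ext hab
  have h4 := Subgroup.card_mul_index (Subgroup.normalizer ((P : Subgroup S) : Set S))
  have h5 : Nat.card (Sylow p S) = (Subgroup.normalizer ((P : Subgroup S) : Set S)).index :=
    Sylow.card_eq_index_normalizer P
  rw [← h5] at h4
  have h6 : p * cntS S y 2 ≤ p * Nat.card (Subgroup.normalizer ((P : Subgroup S) : Set S)) + Nat.card S := by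
    refine h1.trans ?_
    have := Nat.mul_le_mul_left p (h2.trans h3)
    omega
  generalize Nat.card (Sylow p S) = n at *
  generalize Nat.card (Subgroup.normalizer ((P : Subgroup S) : Set S)) = t at *
  calc p * n * cntS S y 2 = n * (p * cntS S y 2) := by ring
    _ ≤ n * (p * t + Nat.card S) := Nat.mul_le_mul_left _ h6
    _ = p * (t * n) + n * Nat.card S := by ring
    _ = _ := by rw [h4]; ring

theorem d2_bound (S : Subgroup G) [S.Normal] (y : G) (hperf : commutator S = ⊤)
    (hns : ¬ Group.IsSolvable S)
    (hmin : ∀ N : Subgroup G, N.Normal → N ≠ ⊥ → ¬ Group.IsSolvable N) :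
    30 * cntS S y 2 ≤ 13 * Nat.card S := by
  have hne1 : ∀ (p : ℕ) [Fact p.Prime], p ∣ Nat.card S → p + 1 ≤ Nat.card (Sylow p S) := by
    intro p hpf hp
    obtain ⟨P⟩ : Nonempty (Sylow p S) := inferInstance
    have hmod := card_sylow_modEq_one p S
    have hpos : 0 < Nat.card (Sylow p S) := Nat.card_pos
    have hne : Nat.card (Sylow p S) ≠ 1 := by
      intro h1
      have hsub : Subsingleton (Sylow p S) := Finite.card_le_one_iff_subsingleton.1 h1.le
      have hch := Sylow.characteristic_of_subsingleton P
      have hnorm : ((P : Subgroup S).map S.subtype).Normal := ConjAct.normal_of_characteristic_of_normal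
      have hPb : (P : Subgroup S) ≠ ⊥ := P.ne_bot_of_dvd_card hp
      apply hmin _ hnorm
      · intro hb
        apply hPb
        rwa [Subgroup.map_eq_bot_iff_of_injective _ S.subtype_injective] at hb
      · have hpg : IsPGroup p ((P : Subgroup S).map S.subtype) := IsPGroup.map P.2 S.subtype
        have := hpg.isNilpotent
        infer_instance
    have hdv := (Nat.modEq_iff_dvd' hpos).1 hmod.symm
    have := Nat.le_of_dvd (by omega) hdv
    omega
  by_cases h5 : ∃ p, p.Prime ∧ 5 ≤ p ∧ p ∣ Nat.card S
  · obtain ⟨p, hp, hp5, hpd⟩ := h5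
    have := Fact.mk hp
    have h1 := hne1 p hpd
    have h2 := d2_sylow S y p
    have h6 : 6 ≤ Nat.card (Sylow p S) := by omega
    generalize Nat.card (Sylow p S) = n at *
    have h3 : 30 * (p + n) ≤ 11 * (p * n) := by nlinarith
    have hpn : 0 < p * n := by positivity
    apply Nat.le_of_mul_le_mul_left _ hpn
    calc p * n * (30 * cntS S y 2) = 30 * (p * n * cntS S y 2) := by ring
      _ ≤ 30 * ((p + n) * Nat.card S) := Nat.mul_le_mul_left _ h2
      _ = 30 * (p + n) * Nat.card S := by ring
      _ ≤ 11 * (p * n) * Nat.card S := Nat.mul_le_mul_right _ h3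
      _ ≤ p * n * (13 * Nat.card S) := by nlinarith [Nat.zero_le (p * n * Nat.card S)]
  · push Not at h5
    have : Fact (Nat.Prime 3) := ⟨Nat.prime_three⟩
    have : Fact (Nat.Prime 2) := ⟨Nat.prime_two⟩
    have hp23 : ∀ p, p.Prime → p ∣ Nat.card S → p = 2 ∨ p = 3 := by
      intro p hp hpd
      by_contra hcon
      have h4 : p ≠ 4 := by rintro rfl; revert hp; norm_num
      have := hp.two_le
      exact h5 p hp (by omega) hpd
    have h3 : 3 ∣ Nat.card S := by
      by_contra h3
      apply hns
      have hpg : IsPGroup 2 S := by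
        apply IsPGroup.of_card (n := (Nat.card S).primeFactorsList.length)
        apply Nat.eq_prime_pow_of_unique_prime_dvd Nat.card_pos.ne'
        intro q hq hqd
        rcases hp23 q hq hqd with h | h
        · exact h
        · rw [h] at hqd; exact absurd hqd h3
      have := hpg.isNilpotent
      infer_instance
    have h1 := hne1 3 h3
    have h4 := card_sylow_ne_four hperf
    have hmod := card_sylow_modEq_one 3 S
    have h7 : Nat.card (Sylow 3 S) ≠ 7 := by
      intro h7
      obtain ⟨P⟩ : Nonempty (Sylow 3 S) := inferInstance
      have e1 := P.card_dvd_index.trans (Subgroup.index_dvd_card (P : Subgroup S))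
      rw [h7] at e1
      have := hp23 7 (by norm_num) e1
      omega
    have h2 := d2_sylow S y 3
    have h10 : 10 ≤ Nat.card (Sylow 3 S) := by
      unfold Nat.ModEq at hmod
      omega
    generalize Nat.card (Sylow 3 S) = n at *
    have hn : 30 * (3 + n) ≤ 13 * (3 * n) := by omega
    have hpn : 0 < 3 * n := by omega
    apply Nat.le_of_mul_le_mul_left _ hpn
    calc 3 * n * (30 * cntS S y 2) = 30 * (3 * n * cntS S y 2) := by ring
      _ ≤ 30 * ((3 + n) * Nat.card S) := Nat.mul_le_mul_left _ h2
      _ = 30 * (3 + n) * Nat.card S := by ring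
      _ ≤ 13 * (3 * n) * Nat.card S := Nat.mul_le_mul_right _ hn
      _ = _ := by ring
end cosetred


open Finset
set_option linter.unusedSectionVars false
section reduction
open scoped Classical
universe u

theorem sum_coset {G : Type u} [Group G] [Fintype G] (S : Subgroup G)
    (h : ∀ y : G, 311 * Nat.card S < 100 * ∑ s ∈ univ.filter (fun s : G => s ∈ S), orderOf (y * s)) :
    311 * Fintype.card G < 100 * ∑ x : G, orderOf x := by
  have h1 : ∑ y : G, 311 * Nat.card S <
      ∑ y : G, 100 * ∑ s ∈ univ.filter (fun s : G => s ∈ S), orderOf (y * s) :=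
    Finset.sum_lt_sum_of_nonempty univ_nonempty (fun y _ => h y)
  rw [Finset.sum_const, Finset.card_univ, smul_eq_mul, ← Finset.mul_sum, Finset.sum_comm] at h1
  have h2 : ∀ s ∈ univ.filter (fun s : G => s ∈ S), ∑ y : G, orderOf (y * s) = ∑ y : G, orderOf y := by
    intro s _
    exact Equiv.sum_comp (Equiv.mulRight s) (fun x => orderOf x)
  rw [Finset.sum_congr rfl h2, Finset.sum_const, card_sub, smul_eq_mul] at h1
  have hpos : 0 < Nat.card S := Nat.card_pos
  apply Nat.lt_of_mul_lt_mul_left (a := Nat.card S)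
  calc _ = Fintype.card G * (311 * Nat.card S) := by ring
    _ < _ := h1
    _ = _ := by ring

theorem sum_quot {G : Type u} [Group G] [Fintype G] (N : Subgroup G) [N.Normal]
    (h : 311 * Fintype.card (G ⧸ N) < 100 * ∑ q : G ⧸ N, orderOf q) :
    311 * Fintype.card G < 100 * ∑ x : G, orderOf x := by
  have hfib : ∀ q : G ⧸ N, (univ.filter (fun x : G => (QuotientGroup.mk x : G ⧸ N) = q)).card = Nat.card N := by
    intro q
    obtain ⟨z, rfl⟩ := QuotientGroup.mk_surjective q
    rw [← card_sub]
    symm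
    apply Finset.card_bij (fun n _ => z * n)
    · intro n hn
      simp only [mem_filter, mem_univ, true_and] at hn ⊢
      rw [eq_comm, QuotientGroup.eq]
      simpa using hn
    · intro a _ b _ hab
      simpa using hab
    · intro x hx
      simp only [mem_filter, mem_univ, true_and] at hx
      rw [eq_comm, QuotientGroup.eq] at hx
      exact ⟨z⁻¹ * x, by simpa using hx, by group⟩
  have h1 : ∑ x : G, orderOf (QuotientGroup.mk x : G ⧸ N) = Nat.card N * ∑ q : G ⧸ N, orderOf q := by
    rw [← Finset.sum_fiberwise univ (fun x : G => (QuotientGroup.mk x : G ⧸ N)), Finset.mul_sum]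
    refine Finset.sum_congr rfl fun q _ => ?_
    rw [← hfib q, ← smul_eq_mul, ← Finset.sum_const]
    refine Finset.sum_congr rfl fun x hx => ?_
    simp only [mem_filter, mem_univ, true_and] at hx
    rw [hx]
  have h2 : ∑ x : G, orderOf (QuotientGroup.mk x : G ⧸ N) ≤ ∑ x : G, orderOf x := by
    refine Finset.sum_le_sum fun x _ => ?_
    exact Nat.le_of_dvd (orderOf_pos x) (orderOf_map_dvd (QuotientGroup.mk' N) x)
  have h3 := Subgroup.card_eq_card_quotient_mul_card_subgroup N
  rw [Nat.card_eq_fintype_card, Nat.card_eq_fintype_card (α := G ⧸ N)] at h3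
  have hpos : 0 < Nat.card N := Nat.card_pos
  rw [h1] at h2
  have h4 := Nat.mul_lt_mul_of_pos_left h hpos
  rw [h3]
  calc _ = Nat.card N * (311 * Fintype.card (G ⧸ N)) := by ring
    _ < _ := h4
    _ = 100 * (Nat.card N * ∑ q : G ⧸ N, orderOf q) := by ring
    _ ≤ _ := Nat.mul_le_mul_left _ h2

theorem pow_mem_iff_quot {G : Type u} [Group G] (S : Subgroup G) [S.Normal] (y : G) (k : ℕ) :
    (QuotientGroup.mk y : G ⧸ S) ^ k = 1 ↔ y ^ k ∈ S := by
  rw [← QuotientGroup.mk_pow, QuotientGroup.eq_one_iff]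

theorem coset_avg {G : Type u} [Group G] [Fintype G] (S : Subgroup G) [S.Normal]
    (hS : 311 * Nat.card S < 100 * ∑ s : S, orderOf s)
    (hperf : commutator S = ⊤) (hns : ¬ Group.IsSolvable S)
    (hmin : ∀ N : Subgroup G, N.Normal → N ≠ ⊥ → ¬ Group.IsSolvable N) (y : G) :
    311 * Nat.card S < 100 * ∑ s ∈ univ.filter (fun s : G => s ∈ S), orderOf (y * s) := by
  have hpos : 0 < Nat.card S := Nat.card_pos
  have hdvd : ∀ s : G, s ∈ S → orderOf (QuotientGroup.mk y : G ⧸ S) ∣ orderOf (y * s) := by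
    intro s hs
    have h1 := orderOf_map_dvd (QuotientGroup.mk' S) (y * s)
    have h2 : QuotientGroup.mk' S (y * s) = QuotientGroup.mk y := by
      rw [QuotientGroup.mk'_apply, eq_comm, QuotientGroup.eq]; simpa using hs
    rwa [h2] at h1
  have hd0 : 0 < orderOf (QuotientGroup.mk y : G ⧸ S) := orderOf_pos _
  have hcnt : ∀ k, ∑ s ∈ univ.filter (fun s : G => s ∈ S), (if (y * s) ^ k = 1 then 1 else 0) = cntS S y k := by
    intro k
    rw [← Finset.card_filter, Finset.filter_filter]; rfl
  obtain ⟨d, hd⟩ : ∃ d, d = orderOf (QuotientGroup.mk y : G ⧸ S) := ⟨_, rfl⟩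
  rw [← hd] at hdvd hd0
  have hd4 : d = 1 ∨ d = 2 ∨ d = 3 ∨ 4 ≤ d := by omega
  rcases hd4 with rfl | rfl | rfl | h4
  · have hy : y ∈ S := by
      rw [← QuotientGroup.eq_one_iff]
      exact orderOf_eq_one_iff.1 hd.symm
    have e : ∑ s ∈ univ.filter (fun s : G => s ∈ S), orderOf (y * s) = ∑ s : S, orderOf s := by
      symm
      apply Finset.sum_bij (fun (s : S) _ => y⁻¹ * (s : G))
      · intro s _
        simp only [mem_filter, mem_univ, true_and]
        exact S.mul_mem (S.inv_mem hy) s.2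
      · intro a _ b _ hab
        exact Subtype.ext (by simpa using hab)
      · intro s hs
        simp only [mem_filter, mem_univ, true_and] at hs
        exact ⟨⟨y * s, S.mul_mem hy hs⟩, mem_univ _, by simp⟩
      · intro s _
        rw [mul_inv_cancel_left, Subgroup.orderOf_coe]
    rw [e]; exact hS
  · have hb := d2_bound S y hperf hns hmin
    have ht : ∀ s ∈ univ.filter (fun s : G => s ∈ S), 4 ≤ orderOf (y * s) +
        2 * (if (y * s) ^ 2 = 1 then 1 else 0) := by
      intro s hs
      simp only [mem_filter, mem_univ, true_and] at hs
      have h1 := hdvd s hs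
      have h0 := orderOf_pos (y * s)
      split_ifs with h
      · omega
      · have : orderOf (y * s) ≠ 2 := by
          intro h2; apply h; rw [← h2]; exact pow_orderOf_eq_one _
        omega
    have hs := Finset.sum_le_sum ht
    rw [Finset.sum_add_distrib, ← Finset.mul_sum, hcnt, Finset.sum_const, card_sub, smul_eq_mul] at hs
    omega
  · have ht : ∀ s ∈ univ.filter (fun s : G => s ∈ S), 6 ≤ orderOf (y * s) +
        3 * (if (y * s) ^ 3 = 1 then 1 else 0) := by
      intro s hs
      simp only [mem_filter, mem_univ, true_and] at hs
      have h1 := hdvd s hs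
      have h0 := orderOf_pos (y * s)
      split_ifs with h
      · omega
      · have : orderOf (y * s) ≠ 3 := by
          intro h2; apply h; rw [← h2]; exact pow_orderOf_eq_one _
        omega
    have hs := Finset.sum_le_sum ht
    rw [Finset.sum_add_distrib, ← Finset.mul_sum, hcnt, Finset.sum_const, card_sub, smul_eq_mul] at hs
    by_contra hcon
    apply hns
    apply d3_solvable S y
    omega
  · have ht : ∀ s ∈ univ.filter (fun s : G => s ∈ S), 4 ≤ orderOf (y * s) := by
      intro s hs
      simp only [mem_filter, mem_univ, true_and] at hs
      exact h4.trans (Nat.le_of_dvd (orderOf_pos _) (hdvd s hs))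
    have hs := Finset.sum_le_sum ht
    rw [Finset.sum_const, card_sub, smul_eq_mul] at hs
    omega

theorem main_nat (n : ℕ) : ∀ (G : Type u) [Group G] [Fintype G], Fintype.card G ≤ n →
    ¬ Group.IsSolvable G → 311 * Fintype.card G < 100 * ∑ x : G, orderOf x := by
  induction n with
  | zero =>
    intro G _ _ hn
    have : 0 < Fintype.card G := Fintype.card_pos
    omega
  | succ n ih =>
    intro G _ _ hn hns
    by_contra hcon
    have hquot : ∀ N : Subgroup G, ∀ _ : N.Normal, N ≠ ⊥ → Group.IsSolvable (G ⧸ N) := by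
      intro N hN hNb
      by_contra hq
      apply hcon
      apply sum_quot N
      apply ih _ _ hq
      have h1 := Subgroup.card_eq_card_quotient_mul_card_subgroup N
      have h2 : 1 < Nat.card N := by
        rw [Finite.one_lt_card_iff_nontrivial, Subgroup.nontrivial_iff_ne_bot]; exact hNb
      rw [Nat.card_eq_fintype_card, Nat.card_eq_fintype_card (α := G ⧸ N)] at h1
      have h3 : 0 < Fintype.card (G ⧸ N) := Fintype.card_pos
      nlinarith
    have hmin : ∀ N : Subgroup G, N.Normal → N ≠ ⊥ → ¬ Group.IsSolvable N := by
      intro N hN hNb hs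
      apply hns
      rw [Group.isSolvable_iff_subgroup_quotient N]
      exact ⟨hs, hquot N hN hNb⟩
    have hnt : Nontrivial G := by
      by_contra h
      rw [not_nontrivial_iff_subsingleton] at h
      exact hns inferInstance
    obtain ⟨S, ⟨hSn, hSb⟩, hSmin⟩ := Set.exists_min_image {N : Subgroup G | N.Normal ∧ N ≠ ⊥}
      (fun N => Nat.card N) (Set.toFinite _) ⟨⊤, inferInstance, top_ne_bot⟩
    have hSns := hmin S hSn hSb
    have hmineq : ∀ N : Subgroup G, N.Normal → N ≠ ⊥ → N ≤ S → N = S := by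
      intro N h1 h2 h3
      exact Subgroup.eq_of_le_of_card_ge h3 (hSmin N ⟨h1, h2⟩)
    by_cases hSt : S = ⊤
    · have hsimp : IsSimpleGroup G := by
        constructor
        intro N hN
        by_cases hNb : N = ⊥
        · exact Or.inl hNb
        · right
          rw [← hSt]
          exact hmineq N hN hNb (by rw [hSt]; exact le_top)
      exact hcon (simple_case (fun h => hns (Group.isSolvable_of_comm h)))
    · have hcardS : Nat.card S < Fintype.card G := by
        rw [← Nat.card_eq_fintype_card]
        by_contra hge
        apply hSt
        exact Subgroup.eq_top_of_le_card S (by omega)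
      have hS := ih S (by rw [← Nat.card_eq_fintype_card]; omega) hSns
      rw [← Nat.card_eq_fintype_card] at hS
      have hcomm : ⁅S, S⁆ = S := by
        apply hmineq _ (Subgroup.commutator_normal S S)
        · intro hb
          apply hSns
          apply Group.isSolvable_of_comm
          intro a b
          have h1 := Subgroup.commutator_eq_bot_iff_le_centralizer.1 hb a.2
          rw [Subgroup.mem_centralizer_iff] at h1
          exact Subtype.ext (h1 b b.2).symm
        · exact Subgroup.commutator_le_left S S
      have hperf : commutator S = ⊤ := by
        have h1 : (commutator S).map S.subtype = (⊤ : Subgroup S).map S.subtype := by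
          rw [Subgroup.map_subtype_commutator, hcomm, ← MonoidHom.range_eq_map, Subgroup.range_subtype]
        exact Subgroup.map_injective S.subtype_injective h1
      exact hcon (sum_coset S (coset_avg S hS hperf hSns hmin))
end reduction


end helpers

theorem avgOrder_gt_of_not_solvable {G : Type*} [Group G] [Fintype G]
    (h : ¬ IsSolvable G) : 311 / 100 < avgOrder G := by
  have h1 := main_nat (Fintype.card G) G le_rfl h
  have hc : (0:ℚ) < Fintype.card G := by exact_mod_cast Fintype.card_pos
  have h2 : (311 * Fintype.card G : ℚ) < 100 * ∑ x : G, (orderOf x : ℚ) := by exact_mod_cast h1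
  unfold avgOrder
  rw [div_lt_div_iff₀ (by norm_num) hc]
  linarith
end
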